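/- arXiv:1808.06221 — 8 statements merged into one kernel-verified Lean document; each statement's English description precedes it below -/
import Mathlib

section
/- For every positive integer m there is no real constant C > 0 such that for all (z₁,z₂) ∈ ℂ² \ {(0,0)} one has Σ_{j,k ≥ 0, j+k ≥ m} |z₁|^{2j}|z₂|^{2k} / N_m(j,k) = C · exp(m·Φ(z₁,z₂)). (This expresses that the multiple m·g_EH of the Eguchi–Hanson metric is not balanced in the sense of Donaldson: the Rawnsley ε-function of m·g_EH, which equals e^{−mΦ} times the left-hand sum, is never a positive constant.) -/
open MeasureTheory

/-- The weight `w_m(z) = exp(-m√(u²+1)) · ((1+√(u²+1))/u)^m` with `u = |z₁|² + |z₂|²`. -/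
noncomputable def wEH (m : ℕ) (z : ℂ × ℂ) : ℝ :=
  Real.exp (-(m * Real.sqrt ((‖z.1‖ ^ 2 + ‖z.2‖ ^ 2) ^ 2 + 1))) *
    ((1 + Real.sqrt ((‖z.1‖ ^ 2 + ‖z.2‖ ^ 2) ^ 2 + 1)) /
      (‖z.1‖ ^ 2 + ‖z.2‖ ^ 2)) ^ m

/-- `(1/π²)` times the Lebesgue measure on `ℂ² ≅ ℝ⁴`. -/
noncomputable def muEH : Measure (ℂ × ℂ) :=
  (ENNReal.ofReal (1 / Real.pi ^ 2)) • volume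

/-- The weighted norm `N_m(j,k) = ∫ w_m(z) |z₁|^{2j} |z₂|^{2k} dμ(z)`. -/
noncomputable def NEH (m j k : ℕ) : ENNReal :=
  ∫⁻ z : ℂ × ℂ,
    ENNReal.ofReal (wEH m z * ‖z.1‖ ^ (2 * j) * ‖z.2‖ ^ (2 * k)) ∂muEH

/-- The Kähler potential of the Eguchi–Hanson metric on `ℂ² \ {0}`. -/
noncomputable def PhiEH (z : ℂ × ℂ) : ℝ :=
  Real.sqrt ((‖z.1‖ ^ 2 + ‖z.2‖ ^ 2) ^ 2 + 1) +
    Real.log (‖z.1‖ ^ 2 + ‖z.2‖ ^ 2) -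
    Real.log (1 + Real.sqrt ((‖z.1‖ ^ 2 + ‖z.2‖ ^ 2) ^ 2 + 1))

/-!
Write `exp Φ = u · ρ(u)` with `ρ(u) = exp √(u² + 1) / (1 + √(u² + 1))`. On the axis `z₂ = 0`, where
`u = |z₁|²`, the balanced equation divided by `u ^ m` reads `Σₙ uⁿ / N_m(m + n, 0) = C · ρ(u) ^ m`
for `u > 0`. The right-hand side is an even differentiable function of `u ∈ ℝ`, so the linear
coefficient `1 / N_m(m + 1, 0)` vanishes. But `N_m(m + 1, 0)` is positive, since its integrand is,
and finite, since `w_m · u ^ (m + n)` is bounded by a Gaussian.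
-/

open Filter Topology
open scoped Nat

open FormalMultilinearSeries in
lemma hasDerivAt_tsum_mul_pow_zero {𝕜 : Type*} [NontriviallyNormedField 𝕜] [CompleteSpace 𝕜]
    {a : ℕ → 𝕜} {x : 𝕜} (hx : x ≠ 0) (hsum : Summable fun n => a n * x ^ n) :
    HasDerivAt (fun y => ∑' n, a n * y ^ n) (a 1) 0 := by
  have hradius : 0 < (ofScalars 𝕜 a).radius := by
    refine lt_of_lt_of_le (b := (‖x‖₊ : ENNReal)) (by simpa using hx)
      (le_radius_of_tendsto (l := 0) _ ?_)
    simpa [ofScalars_norm] using hsum.tendsto_atTop_zero.norm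
  have h := ((ofScalars 𝕜 a).hasFPowerSeriesOnBall hradius).hasFPowerSeriesAt.hasDerivAt
  have hsum_eq : (ofScalars 𝕜 a).sum = fun y => ∑' n, a n * y ^ n := by
    simpa only [smul_eq_mul] using! ofScalarsSum_eq_tsum (E := 𝕜) a
  simpa [hsum_eq] using h

lemma deriv_zero_eq_zero_of_even {𝕜 F : Type*} [NontriviallyNormedField 𝕜]
    [NormedAddCommGroup F] [NormedSpace 𝕜 F] [IsAddTorsionFree F] {f : 𝕜 → F} (hf : f.Even) :
    deriv f 0 = 0 := by
  have h := deriv_comp_neg f 0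
  rw [funext hf, neg_zero] at h
  exact self_eq_neg.mp h

lemma hasDerivAt_unique_of_eventuallyEq_nhdsGT {F : Type*} [NormedAddCommGroup F] [NormedSpace ℝ F]
    {f g : ℝ → F} {f' g' : F} {x : ℝ}
    (hf : HasDerivAt f f' x) (hg : HasDerivAt g g' x) (hfg : f =ᶠ[𝓝[>] x] g) : f' = g' := by
  have hx : f x = g x := tendsto_nhds_unique_of_eventuallyEq
    hf.continuousAt.continuousWithinAt hg.continuousAt.continuousWithinAt hfg
  exact (uniqueDiffWithinAt_Ioi x).eq_deriv _ hf.hasDerivWithinAt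
    (hg.hasDerivWithinAt.congr_of_eventuallyEq hfg hx)

lemma coeff_one_eq_zero_of_hasSum_of_even {a : ℕ → ℝ} {f : ℝ → ℝ} (heven : f.Even)
    (hdiff : DifferentiableAt ℝ f 0)
    (hsum : ∀ᶠ x in 𝓝[>] 0, HasSum (fun n => a n * x ^ n) (f x)) : a 1 = 0 := by
  obtain ⟨x, hx, hx_pos⟩ := (hsum.and self_mem_nhdsWithin).exists
  have hseries := hasDerivAt_tsum_mul_pow_zero (ne_of_gt hx_pos) hx.summable
  have hf : HasDerivAt f 0 0 :=
    hdiff.hasDerivAt.congr_deriv (deriv_zero_eq_zero_of_even heven)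
  exact hasDerivAt_unique_of_eventuallyEq_nhdsGT hseries hf (hsum.mono fun _ h => h.tsum_eq)

lemma tsum_pow_mul_zero_pow_mul {K : Type*} [Field K] [TopologicalSpace K] [IsTopologicalRing K]
    [T2Space K] (m : ℕ) (c : ℕ × ℕ → K) (x : K) :
    ∑' p : {p : ℕ × ℕ // m ≤ p.1 + p.2}, x ^ p.1.1 * 0 ^ p.1.2 * c p =
      x ^ m * ∑' n, c (m + n, 0) * x ^ n := by
  let onAxis (n : ℕ) : {p : ℕ × ℕ // m ≤ p.1 + p.2} := ⟨(m + n, 0), by simp⟩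
  have hinj : Function.Injective onAxis := fun i j h => by simpa [onAxis] using h
  rw [← hinj.tsum_eq, ← tsum_mul_left]
  · refine tsum_congr fun n => ?_
    simp only [onAxis]
    ring
  · rintro ⟨⟨j, k⟩, hjk⟩ hne
    obtain rfl : k = 0 := by
      by_contra hk
      simp [hk] at hne
    exact ⟨j - m, by simp only [onAxis]; congr; omega⟩

lemma integrable_exp_neg_mul_norm_sq {V : Type*} [NormedAddCommGroup V] [InnerProductSpace ℝ V]
    [FiniteDimensional ℝ V] [MeasurableSpace V] [BorelSpace V] {b : ℝ} (hb : 0 < b) :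
    Integrable fun v : V => Real.exp (-b * ‖v‖ ^ 2) := by
  have h := (GaussianFourier.integrable_cexp_neg_mul_sq_norm_add (V := V)
    (b := b) (by simpa using hb) 0 0).norm
  simpa [Complex.norm_exp, ← Complex.ofReal_pow] using h

lemma pow_le_factorial_mul_exp {x b : ℝ} (hx : 0 ≤ x) (hb : 0 < b) (n : ℕ) :
    x ^ n ≤ n ! / b ^ n * Real.exp (b * x) := by
  have h := Real.pow_div_factorial_le_exp (b * x) (by positivity) n
  rw [div_le_iff₀ (by positivity), mul_pow] at h
  rw [div_mul_eq_mul_div, le_div_iff₀ (by positivity)]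
  linarith

/-- The squared radius `u = |z₁|² + |z₂|²`. -/
noncomputable def uEH (z : ℂ × ℂ) : ℝ :=
  ‖z.1‖ ^ 2 + ‖z.2‖ ^ 2

/-- The radial function `ρ` with `exp (Φ z) = u · ρ u`. -/
noncomputable def rhoEH (u : ℝ) : ℝ :=
  Real.exp √(u ^ 2 + 1) / (1 + √(u ^ 2 + 1))

lemma rhoEH_even : rhoEH.Even := fun u => by
  simp only [rhoEH, neg_sq]

lemma differentiable_rhoEH : Differentiable ℝ rhoEH := by
  have hsqrt : Differentiable ℝ fun u : ℝ => √(u ^ 2 + 1) :=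
    Differentiable.sqrt (by fun_prop) fun u => by positivity
  exact hsqrt.exp.div (hsqrt.const_add 1) fun u => by positivity

lemma one_le_rhoEH (u : ℝ) : 1 ≤ rhoEH u := by
  rw [rhoEH, one_le_div (by positivity), add_comm]
  exact Real.add_one_le_exp _

lemma rhoEH_pos (u : ℝ) : 0 < rhoEH u :=
  zero_lt_one.trans_le (one_le_rhoEH u)

lemma inv_rhoEH_le (u : ℝ) : (rhoEH u)⁻¹ ≤ 2 * Real.exp (-(1 / 2) * u) := by
  set s := √(u ^ 2 + 1)
  have hus : u ≤ s := Real.le_sqrt_of_sq_le (by linarith)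
  calc (rhoEH u)⁻¹ = (1 + s) * Real.exp (-s) := by
        rw [rhoEH, inv_div, Real.exp_neg, div_eq_mul_inv]
    _ ≤ 2 * Real.exp (s / 2) * Real.exp (-s) := by
        gcongr
        linarith [Real.add_one_le_exp (s / 2)]
    _ = 2 * Real.exp (-(1 / 2) * s) := by
        rw [mul_assoc, ← Real.exp_add]
        ring_nf
    _ ≤ 2 * Real.exp (-(1 / 2) * u) := by
        gcongr 2 * Real.exp ?_
        linarith

lemma uEH_nonneg (z : ℂ × ℂ) : 0 ≤ uEH z := by
  unfold uEH
  positivity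

lemma uEH_pos {z : ℂ × ℂ} (hz : z ≠ 0) : 0 < uEH z := by
  rcases not_and_or.mp (mt Prod.ext_iff.mpr hz) with h | h
  · have := norm_pos_iff.mpr h
    unfold uEH
    positivity
  · have := norm_pos_iff.mpr h
    unfold uEH
    positivity

lemma exp_mul_PhiEH (m : ℕ) {z : ℂ × ℂ} (hz : z ≠ 0) :
    Real.exp (m * PhiEH z) = (uEH z * rhoEH (uEH z)) ^ m := by
  have hΦ : PhiEH z = √(uEH z ^ 2 + 1) + Real.log (uEH z) - Real.log (1 + √(uEH z ^ 2 + 1)) := rfl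
  rw [Real.exp_nat_mul, hΦ, Real.exp_sub, Real.exp_add, Real.exp_log (uEH_pos hz),
    Real.exp_log (by positivity), rhoEH]
  ring

-- At `z = 0` both sides are `0 ^ m`, by the convention `1 / 0 = 0`.
lemma wEH_eq (m : ℕ) (z : ℂ × ℂ) : wEH m z = ((uEH z * rhoEH (uEH z)) ^ m)⁻¹ := by
  have hw : wEH m z =
      Real.exp (-(m * √(uEH z ^ 2 + 1))) * ((1 + √(uEH z ^ 2 + 1)) / uEH z) ^ m := rfl
  rw [hw, Real.exp_neg, Real.exp_nat_mul, rhoEH, ← inv_pow, ← inv_pow, ← mul_pow]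
  simp only [mul_inv, inv_div]
  ring

lemma wEH_nonneg (m : ℕ) (z : ℂ × ℂ) : 0 ≤ wEH m z := by
  have := uEH_nonneg z
  have := rhoEH_pos (uEH z)
  rw [wEH_eq]
  positivity

lemma wEH_pos (m : ℕ) {z : ℂ × ℂ} (hz : z ≠ 0) : 0 < wEH m z := by
  have := uEH_pos hz
  have := rhoEH_pos (uEH z)
  rw [wEH_eq]
  positivity

lemma wEH_mul_uEH_pow_le {m : ℕ} (hm : m ≠ 0) (n : ℕ) (z : ℂ × ℂ) :
    wEH m z * uEH z ^ (m + n) ≤ 2 * (n ! / (1 / 4) ^ n) * Real.exp (-(1 / 4) * uEH z) := by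
  have hu := uEH_nonneg z
  have hρ := rhoEH_pos (uEH z)
  have hρ_pow : (rhoEH (uEH z) ^ m)⁻¹ ≤ (rhoEH (uEH z))⁻¹ :=
    inv_anti₀ hρ (le_self_pow₀ (one_le_rhoEH _) hm)
  calc wEH m z * uEH z ^ (m + n)
      = (uEH z ^ m)⁻¹ * uEH z ^ m * (rhoEH (uEH z) ^ m)⁻¹ * uEH z ^ n := by
        rw [wEH_eq, mul_pow, mul_inv, pow_add]
        ring
    _ ≤ 1 * (2 * Real.exp (-(1 / 2) * uEH z)) *
          (n ! / (1 / 4) ^ n * Real.exp (1 / 4 * uEH z)) := by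
        gcongr
        · exact inv_mul_le_one
        · exact hρ_pow.trans (inv_rhoEH_le _)
        · exact pow_le_factorial_mul_exp hu (by norm_num) n
    _ = 2 * (n ! / (1 / 4) ^ n) * (Real.exp (-(1 / 2) * uEH z) * Real.exp (1 / 4 * uEH z)) := by
        ring
    _ = 2 * (n ! / (1 / 4) ^ n) * Real.exp (-(1 / 4) * uEH z) := by
        rw [← Real.exp_add]
        ring_nf

lemma norm_pow_mul_norm_pow_le_uEH_pow (j k : ℕ) (z : ℂ × ℂ) :
    ‖z.1‖ ^ (2 * j) * ‖z.2‖ ^ (2 * k) ≤ uEH z ^ (j + k) := by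
  rw [pow_mul, pow_mul, pow_add, uEH]
  gcongr
  · exact le_add_of_nonneg_right (by positivity)
  · exact le_add_of_nonneg_left (by positivity)

lemma measurable_NEH_integrand (m j k : ℕ) :
    Measurable fun z : ℂ × ℂ => ENNReal.ofReal (wEH m z * ‖z.1‖ ^ (2 * j) * ‖z.2‖ ^ (2 * k)) := by
  unfold wEH
  fun_prop

instance : muEH.IsOpenPosMeasure :=
  Measure.isOpenPosMeasure_smul volume (by simp [Real.pi_pos])

lemma NEH_ne_zero (m j k : ℕ) : NEH m j k ≠ 0 := by
  have hopen : IsOpen {z : ℂ × ℂ | z.1 ≠ 0 ∧ z.2 ≠ 0} :=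
    (isOpen_ne_fun continuous_fst continuous_const).inter
      (isOpen_ne_fun continuous_snd continuous_const)
  refine ((lintegral_pos_iff_support (measurable_NEH_integrand m j k)).mpr ?_).ne'
  refine (hopen.measure_pos muEH ⟨(1, 1), by simp⟩).trans_le (measure_mono fun z hz => ?_)
  have hw := wEH_pos m (z := z) fun h => hz.1 (congrArg Prod.fst h)
  have h₁ := norm_pos_iff.mpr hz.1
  have h₂ := norm_pos_iff.mpr hz.2
  rw [Function.mem_support, ENNReal.ofReal_ne_zero_iff]
  positivity

lemma integrable_exp_neg_mul_uEH {b : ℝ} (hb : 0 < b) :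
    Integrable fun z : ℂ × ℂ => Real.exp (-b * uEH z) := by
  have hgauss := integrable_exp_neg_mul_norm_sq (V := ℂ) hb
  simpa only [uEH, mul_add, Real.exp_add] using! hgauss.mul_prod hgauss

lemma NEH_ne_top {m j k : ℕ} (hm : m ≠ 0) (hjk : m ≤ j + k) : NEH m j k ≠ ⊤ := by
  obtain ⟨n, hn⟩ := Nat.exists_eq_add_of_le hjk
  have hbound (z : ℂ × ℂ) : wEH m z * ‖z.1‖ ^ (2 * j) * ‖z.2‖ ^ (2 * k) ≤
      2 * (n ! / (1 / 4) ^ n) * Real.exp (-(1 / 4) * uEH z) := by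
    calc wEH m z * ‖z.1‖ ^ (2 * j) * ‖z.2‖ ^ (2 * k)
        ≤ wEH m z * uEH z ^ (j + k) := by
          rw [mul_assoc]
          gcongr
          · exact wEH_nonneg m z
          · exact norm_pow_mul_norm_pow_le_uEH_pow j k z
      _ ≤ 2 * (n ! / (1 / 4) ^ n) * Real.exp (-(1 / 4) * uEH z) :=
          hn ▸ wEH_mul_uEH_pow_le hm n z
  have hint : Integrable (fun z => 2 * (n ! / (1 / 4) ^ n) * Real.exp (-(1 / 4) * uEH z)) muEH :=
    ((integrable_exp_neg_mul_uEH (by norm_num)).const_mul _).smul_measure ENNReal.ofReal_ne_top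
  exact ((lintegral_mono fun z => ENNReal.ofReal_le_ofReal (hbound z)).trans_lt
    hint.lintegral_lt_top).ne

lemma NEH_toReal_pos {m j k : ℕ} (hm : m ≠ 0) (hjk : m ≤ j + k) : 0 < (NEH m j k).toReal :=
  ENNReal.toReal_pos (NEH_ne_zero m j k) (NEH_ne_top hm hjk)

/-- The sum `Σ_{j+k ≥ m} |z₁|^{2j}|z₂|^{2k} / N_m(j,k)`, the reproducing kernel of the weighted
space on the diagonal. Like every `tsum`, it is `0` where the series diverges. -/
noncomputable def kernelEH (m : ℕ) (z : ℂ × ℂ) : ℝ :=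
  ∑' p : {p : ℕ × ℕ // m ≤ p.1 + p.2},
    ‖z.1‖ ^ (2 * p.1.1) * ‖z.2‖ ^ (2 * p.1.2) / (NEH m p.1.1 p.1.2).toReal

lemma kernelEH_mk_zero (m : ℕ) (ζ : ℂ) :
    kernelEH m (ζ, 0) =
      (‖ζ‖ ^ 2) ^ m * ∑' n, (NEH m (m + n) 0).toReal⁻¹ * (‖ζ‖ ^ 2) ^ n := by
  rw [← tsum_pow_mul_zero_pow_mul m fun p => (NEH m p.1 p.2).toReal⁻¹]
  simp only [kernelEH, pow_mul, norm_zero, zero_pow two_ne_zero, div_eq_mul_inv]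

lemma hasSum_of_kernelEH_mk_zero_eq {m : ℕ} {C : ℝ} (hC : C ≠ 0) {ζ : ℂ} (hζ : ζ ≠ 0)
    (hbalanced : kernelEH m (ζ, 0) = C * Real.exp (m * PhiEH (ζ, 0))) :
    HasSum (fun n => (NEH m (m + n) 0).toReal⁻¹ * (‖ζ‖ ^ 2) ^ n)
      (C * rhoEH (‖ζ‖ ^ 2) ^ m) := by
  have hu : uEH (ζ, 0) = ‖ζ‖ ^ 2 := by simp [uEH]
  have hpow : (‖ζ‖ ^ 2) ^ m ≠ 0 := by positivity
  have htsum : ∑' n, (NEH m (m + n) 0).toReal⁻¹ * (‖ζ‖ ^ 2) ^ n = C * rhoEH (‖ζ‖ ^ 2) ^ m := by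
    rw [kernelEH_mk_zero, exp_mul_PhiEH m (by simpa using hζ), hu, mul_pow, mul_left_comm]
      at hbalanced
    exact mul_left_cancel₀ hpow hbalanced
  have hsummable : Summable fun n => (NEH m (m + n) 0).toReal⁻¹ * (‖ζ‖ ^ 2) ^ n := by
    by_contra hdiverges
    rw [tsum_eq_zero_of_not_summable hdiverges] at htsum
    exact mul_ne_zero hC (pow_ne_zero m (rhoEH_pos _).ne') htsum.symm
  exact htsum ▸ hsummable.hasSum

/-- For every positive integer `m`, the metric `m·g_EH` is not balanced: there is no constant
`C > 0` with `Σ_{j+k ≥ m} |z₁|^{2j}|z₂|^{2k}/N_m(j,k) = C·exp(m·Φ(z))` on `ℂ² \ {0}`. -/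
theorem mEguchiHanson_not_balanced (m : ℕ) (hm : 0 < m) :
    ¬ ∃ C : ℝ, 0 < C ∧ ∀ z : ℂ × ℂ, z ≠ 0 →
      (∑' p : {p : ℕ × ℕ // m ≤ p.1 + p.2},
        ‖z.1‖ ^ (2 * (p : ℕ × ℕ).1) * ‖z.2‖ ^ (2 * (p : ℕ × ℕ).2) /
          (NEH m (p : ℕ × ℕ).1 (p : ℕ × ℕ).2).toReal)
        = C * Real.exp (m * PhiEH z) := by
  rintro ⟨C, hC, hbalanced⟩
  have hseries : ∀ x > 0,
      HasSum (fun n => (NEH m (m + n) 0).toReal⁻¹ * x ^ n) (C * rhoEH x ^ m) := by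
    intro x hx
    have hζ : (√x : ℂ) ≠ 0 := by exact_mod_cast (Real.sqrt_pos.mpr hx).ne'
    have h := hasSum_of_kernelEH_mk_zero_eq hC.ne' hζ (hbalanced _ (by simpa using! hζ))
    simpa [hx.le] using h
  have heven : (fun x => C * rhoEH x ^ m).Even := fun x => by simp only [rhoEH_even x]
  have hdiff : Differentiable ℝ fun x => C * rhoEH x ^ m := (differentiable_rhoEH.pow m).const_mul C
  have hcoeff := coeff_one_eq_zero_of_hasSum_of_even heven hdiff.differentiableAt
    (eventually_mem_nhdsWithin.mono hseries)
  exact (inv_pos.mpr (NEH_toReal_pos hm.ne' (by omega))).ne' hcoeff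
end

section
/- For every positive integer m and all nonnegative integers j,k with j+k ≥ m, the weighted norm N_m(j,k) is finite and strictly positive: 0 < N_m(j,k) < ∞. -/
open MeasureTheory

/-!
The integrand is positive on the nonempty open complement of the coordinate axes, so its integral is
positive. For finiteness put `u = |z₁|² + |z₂|²` and `s = √(u² + 1)`. Since
`|z₁|^{2j} |z₂|^{2k} ≤ u^{j+k}` and `j + k ≥ m`, the pole `u⁻ᵐ` of the weight cancels and the
integrand is at most `e^{-ms} (1 + s)^{j+k}`. Half of the exponential decay absorbs the polynomial
factor, and `s ≥ u` turns the other half into a Gaussian in each variable.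
-/

lemma div_pow_mul_pow_le_pow {K : Type*} [Field K] [LinearOrder K] [IsStrictOrderedRing K]
    {t u : K} {m n : ℕ} (hu : 0 ≤ u) (hut : u ≤ t) (hmn : m ≤ n) :
    (t / u) ^ m * u ^ n ≤ t ^ n := by
  have ht : 0 ≤ t := hu.trans hut
  have hcancel : t / u * u ≤ t := mul_le_of_le_div₀ ht hu le_rfl
  obtain ⟨d, rfl⟩ := Nat.exists_eq_add_of_le hmn
  calc (t / u) ^ m * u ^ (m + d) = (t / u * u) ^ m * u ^ d := by ring
    _ ≤ t ^ m * t ^ d := by gcongr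
    _ = t ^ (m + d) := (pow_add t m d).symm

lemma pow_mul_pow_le_add_pow {R : Type*} [CommSemiring R] [PartialOrder R] [IsOrderedRing R]
    {a b : R} (ha : 0 ≤ a) (hb : 0 ≤ b) (j k : ℕ) :
    a ^ j * b ^ k ≤ (a + b) ^ (j + k) := by
  rw [pow_add]
  gcongr
  · exact le_add_of_nonneg_right hb
  · exact le_add_of_nonneg_left ha

lemma exp_neg_mul_mul_pow_le {b t : ℝ} (hb : 0 < b) (ht : 0 ≤ t) (n : ℕ) :
    Real.exp (-(b * t)) * t ^ n ≤ n.factorial / (b / 2) ^ n * Real.exp (-(b / 2 * t)) := by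
  have hpow : t ^ n ≤ n.factorial / (b / 2) ^ n * Real.exp (b / 2 * t) := by
    have h := Real.pow_div_factorial_le_exp (b / 2 * t) (by positivity) n
    rw [div_le_iff₀ (by positivity), mul_pow] at h
    rw [div_mul_eq_mul_div, le_div_iff₀ (by positivity)]
    linarith
  calc Real.exp (-(b * t)) * t ^ n
      ≤ Real.exp (-(b * t)) * (n.factorial / (b / 2) ^ n * Real.exp (b / 2 * t)) := by gcongr
    _ = n.factorial / (b / 2) ^ n * Real.exp (-(b * t) + b / 2 * t) := by rw [Real.exp_add]; ring
    _ = n.factorial / (b / 2) ^ n * Real.exp (-(b / 2 * t)) := by ring_nf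

lemma integrable_exp_neg_mul_sq_norm {V : Type*} [NormedAddCommGroup V] [InnerProductSpace ℝ V]
    [FiniteDimensional ℝ V] [MeasurableSpace V] [BorelSpace V] {b : ℝ} (hb : 0 < b) :
    Integrable (fun v : V ↦ Real.exp (-b * ‖v‖ ^ 2)) := by
  refine Integrable.of_integral_ne_zero ?_
  rw [GaussianFourier.integral_rexp_neg_mul_sq_norm hb]
  positivity

lemma lintegral_pos_of_isOpen {X : Type*} [TopologicalSpace X] [MeasurableSpace X]
    {μ : Measure X} [μ.IsOpenPosMeasure] {f : X → ENNReal} {U : Set X} (hf : Measurable f)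
    (hU : IsOpen U) (hne : U.Nonempty) (hpos : ∀ x ∈ U, 0 < f x) :
    0 < ∫⁻ x, f x ∂μ :=
  (lintegral_pos_iff_support hf).2 <|
    (hU.measure_pos μ hne).trans_le <| measure_mono fun x hx ↦ (hpos x hx).ne'

/-- The weight `wEH` as a function of the squared radius `u = |z₁|² + |z₂|²`. -/
noncomputable def ehProfile (m : ℕ) (u : ℝ) : ℝ :=
  Real.exp (-(m * Real.sqrt (u ^ 2 + 1))) * ((1 + Real.sqrt (u ^ 2 + 1)) / u) ^ m

lemma wEH_eq_ehProfile (m : ℕ) (z : ℂ × ℂ) :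
    wEH m z = ehProfile m (‖z.1‖ ^ 2 + ‖z.2‖ ^ 2) :=
  rfl

lemma ehProfile_nonneg (m : ℕ) {u : ℝ} (hu : 0 ≤ u) : 0 ≤ ehProfile m u := by
  unfold ehProfile
  positivity

lemma ehProfile_pos (m : ℕ) {u : ℝ} (hu : 0 < u) : 0 < ehProfile m u := by
  unfold ehProfile
  positivity

lemma ehProfile_mul_pow_le {m n : ℕ} (hm : 0 < m) (hmn : m ≤ n) {u : ℝ} (hu : 0 ≤ u) :
    ehProfile m u * u ^ n ≤
      Real.exp m * (n.factorial / (m / 2) ^ n) * Real.exp (-(m / 2 * u)) := by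
  unfold ehProfile
  set s := Real.sqrt (u ^ 2 + 1)
  have hus : u ≤ 1 + s := (Real.le_sqrt_of_sq_le (by simp)).trans (le_add_of_nonneg_left one_pos.le)
  calc Real.exp (-(m * s)) * ((1 + s) / u) ^ m * u ^ n
      = Real.exp (-(m * s)) * (((1 + s) / u) ^ m * u ^ n) := mul_assoc _ _ _
    _ ≤ Real.exp (-(m * s)) * (1 + s) ^ n := by
        gcongr
        exact div_pow_mul_pow_le_pow hu hus hmn
    _ = Real.exp m * (Real.exp (-(m * (1 + s))) * (1 + s) ^ n) := by
        rw [← mul_assoc, ← Real.exp_add]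
        ring_nf
    _ ≤ Real.exp m * (n.factorial / (m / 2) ^ n * Real.exp (-(m / 2 * (1 + s)))) := by
        gcongr Real.exp m * ?_
        exact exp_neg_mul_mul_pow_le (Nat.cast_pos.2 hm) (hu.trans hus) n
    _ ≤ Real.exp m * (n.factorial / (m / 2) ^ n * Real.exp (-(m / 2 * u))) := by gcongr
    _ = Real.exp m * (n.factorial / (m / 2) ^ n) * Real.exp (-(m / 2 * u)) :=
        (mul_assoc _ _ _).symm

@[fun_prop]
lemma measurable_wEH (m : ℕ) : Measurable (wEH m) := by
  unfold wEH
  fun_prop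

lemma exists_wEH_mul_monomial_le {m j k : ℕ} (hm : 0 < m) (hjk : m ≤ j + k) :
    ∃ C : ℝ, ∀ z : ℂ × ℂ, wEH m z * ‖z.1‖ ^ (2 * j) * ‖z.2‖ ^ (2 * k) ≤
      C * (Real.exp (-(m / 2) * ‖z.1‖ ^ 2) * Real.exp (-(m / 2) * ‖z.2‖ ^ 2)) := by
  refine ⟨Real.exp m * ((j + k).factorial / (m / 2) ^ (j + k)), fun z ↦ ?_⟩
  rw [wEH_eq_ehProfile, pow_mul, pow_mul, mul_assoc, ← Real.exp_add, ← mul_add, neg_mul]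
  have hprofile : 0 ≤ ehProfile m (‖z.1‖ ^ 2 + ‖z.2‖ ^ 2) := ehProfile_nonneg m (by positivity)
  exact (mul_le_mul_of_nonneg_left
    (pow_mul_pow_le_add_pow (by positivity) (by positivity) j k) hprofile).trans
    (ehProfile_mul_pow_le hm hjk (by positivity))

instance isOpenPosMeasure_muEH : muEH.IsOpenPosMeasure :=
  Measure.isOpenPosMeasure_smul volume
    (ENNReal.ofReal_pos.2 (by positivity : (0 : ℝ) < 1 / Real.pi ^ 2)).ne'

lemma NEH_pos (m j k : ℕ) : 0 < NEH m j k := by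
  have hopen : IsOpen ({0}ᶜ ×ˢ {0}ᶜ : Set (ℂ × ℂ)) :=
    isOpen_compl_singleton.prod isOpen_compl_singleton
  refine lintegral_pos_of_isOpen (by fun_prop) hopen ⟨(1, 1), by simp⟩ fun z hz ↦ ?_
  have hz₁ : 0 < ‖z.1‖ := norm_pos_iff.2 hz.1
  have hz₂ : 0 < ‖z.2‖ := norm_pos_iff.2 hz.2
  have hw : 0 < wEH m z := ehProfile_pos m (by positivity)
  exact ENNReal.ofReal_pos.2 (by positivity)

lemma NEH_lt_top {m j k : ℕ} (hm : 0 < m) (hjk : m ≤ j + k) : NEH m j k < ⊤ := by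
  obtain ⟨C, hC⟩ := exists_wEH_mul_monomial_le hm hjk
  have hgauss : Integrable (fun z : ℂ ↦ Real.exp (-(m / 2) * ‖z‖ ^ 2)) :=
    integrable_exp_neg_mul_sq_norm (by positivity)
  have hdom : Integrable (fun z : ℂ × ℂ ↦
      C * (Real.exp (-(m / 2) * ‖z.1‖ ^ 2) * Real.exp (-(m / 2) * ‖z.2‖ ^ 2))) muEH :=
    ((hgauss.mul_prod hgauss).const_mul C).smul_measure ENNReal.ofReal_ne_top
  exact (lintegral_mono fun z ↦ ENNReal.ofReal_le_ofReal (hC z)).trans_lt hdom.lintegral_lt_top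

/-- For every positive integer `m` and nonnegative integers `j,k` with `j + k ≥ m`,
the weighted norm `N_m(j,k)` is finite and strictly positive. -/
theorem NEH_pos_and_finite (m j k : ℕ) (hm : 0 < m) (hjk : m ≤ j + k) :
    0 < NEH m j k ∧ NEH m j k < ⊤ :=
  ⟨NEH_pos m j k, NEH_lt_top hm hjk⟩
end

section
/- For every positive integer m and all nonnegative integers j,k with j+k ≥ m, the weighted norm factorizes as N_m(j,k) = (2·j!·k! / (j+k+1)!) · ∫₀^∞ e^{−m√(r⁴+1)} (1+√(r⁴+1))^m r^{2(j+k−m)+3} dr. -/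
open MeasureTheory

/-! The weight depends only on `u = |z₁|² + |z₂|²`. Polar coordinates in each factor push the
Lebesgue measure of `ℂ` forward under `z ↦ |z|²` to `π ds` on `(0, ∞)`, which reduces `N_m(j,k)` to
the double integral of `W_m(s + t) sʲ tᵏ`. Integrating first along the segments `s + t = u`
produces the Beta integral `B(j + 1, k + 1) u^(j+k+1) = j! k! / (j + k + 1)! u^(j+k+1)`, and
`u = r²` turns the remaining integral into the stated one. As the norm is an extended nonnegative
real and the right-hand side a Bochner integral, the radial integrand must also be shown integrable;
since `1 + x ≤ 2 exp (x / 2)`, a Gaussian dominates it. -/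

open Set ProbabilityTheory
open scoped ENNReal Nat

theorem lintegral_Ioi_comp_pow {n : ℕ} (hn : n ≠ 0) (f : ℝ → ℝ≥0∞) :
    ∫⁻ r in Ioi (0 : ℝ), ENNReal.ofReal (n * r ^ (n - 1)) * f (r ^ n) =
      ∫⁻ s in Ioi (0 : ℝ), f s := by
  have image_pow : (fun r : ℝ ↦ r ^ n) '' Ioi 0 = Ioi 0 := by
    refine Subset.antisymm (image_subset_iff.2 fun r (hr : 0 < r) ↦ pow_pos hr n) fun s hs ↦ ?_
    exact ⟨s ^ (n⁻¹ : ℝ), Real.rpow_pos_of_pos hs _, Real.rpow_inv_natCast_pow (le_of_lt hs) hn⟩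
  conv_rhs => rw [← image_pow]
  exact (lintegral_image_eq_lintegral_deriv_mul_of_monotoneOn measurableSet_Ioi
    (fun r _ ↦ (hasDerivAt_pow n r).hasDerivWithinAt)
    (fun r hr _ _ hrs ↦ pow_le_pow_left₀ (le_of_lt hr) hrs n) f).symm

theorem lintegral_complex_comp_norm {f : ℝ → ℝ≥0∞} (hf : Measurable f) :
    ∫⁻ z : ℂ, f ‖z‖ =
      ENNReal.ofReal (2 * Real.pi) * ∫⁻ r in Ioi (0 : ℝ), ENNReal.ofReal r * f r := by
  calc ∫⁻ z : ℂ, f ‖z‖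
      = ∫⁻ p in Ioi (0 : ℝ) ×ˢ Ioo (-Real.pi) Real.pi, ENNReal.ofReal p.1 * f |p.1| := by
        simp only [← Complex.lintegral_comp_polarCoord_symm, Complex.norm_polarCoord_symm,
          polarCoord_target, smul_eq_mul]
    _ = ∫⁻ r in Ioi (0 : ℝ), ENNReal.ofReal (2 * Real.pi) * (ENNReal.ofReal r * f |r|) := by
        rw [Measure.volume_eq_prod, ← Measure.prod_restrict, lintegral_prod _ (by fun_prop)]
        simp only [lintegral_const, Measure.restrict_apply_univ, Real.volume_Ioo, sub_neg_eq_add,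
          ← two_mul, mul_comm (ENNReal.ofReal (2 * Real.pi))]
    _ = ENNReal.ofReal (2 * Real.pi) * ∫⁻ r in Ioi (0 : ℝ), ENNReal.ofReal r * f r := by
        rw [lintegral_const_mul _ (by fun_prop)]
        congr 1
        refine setLIntegral_congr_fun measurableSet_Ioi fun r hr ↦ ?_
        rw [abs_of_pos hr]

theorem lintegral_complex_comp_norm_sq {f : ℝ → ℝ≥0∞} (hf : Measurable f) :
    ∫⁻ z : ℂ, f (‖z‖ ^ 2) = ENNReal.ofReal Real.pi * ∫⁻ s in Ioi (0 : ℝ), f s := by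
  rw [lintegral_complex_comp_norm (f := fun r ↦ f (r ^ 2)) (by fun_prop),
    ← lintegral_Ioi_comp_pow two_ne_zero f, mul_comm 2 Real.pi,
    ENNReal.ofReal_mul Real.pi_pos.le, mul_assoc,
    ← lintegral_const_mul _ (by fun_prop)]
  simp only [ENNReal.ofReal_mul zero_le_two, Nat.cast_ofNat, Nat.add_one_sub_one, pow_one,
    mul_assoc]

theorem lintegral_complex_prod_comp_norm_sq {g : ℝ → ℝ → ℝ≥0∞}
    (hg : Measurable (Function.uncurry g)) :
    ∫⁻ z : ℂ × ℂ, g (‖z.1‖ ^ 2) (‖z.2‖ ^ 2) =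
      ENNReal.ofReal (Real.pi ^ 2) *
        ∫⁻ s in Ioi (0 : ℝ), ∫⁻ t in Ioi (0 : ℝ), g s t := by
  have inner_measurable : Measurable fun s ↦ ∫⁻ t in Ioi (0 : ℝ), g s t := hg.lintegral_prod_right
  have inner_radial (x : ℂ) : ∫⁻ y : ℂ, g (‖x‖ ^ 2) (‖y‖ ^ 2) =
      ENNReal.ofReal Real.pi * ∫⁻ t in Ioi (0 : ℝ), g (‖x‖ ^ 2) t :=
    lintegral_complex_comp_norm_sq hg.of_uncurry_left
  calc ∫⁻ z : ℂ × ℂ, g (‖z.1‖ ^ 2) (‖z.2‖ ^ 2)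
      = ∫⁻ x : ℂ, ∫⁻ y : ℂ, g (‖x‖ ^ 2) (‖y‖ ^ 2) :=
        lintegral_prod _ (hg.comp (f := fun z : ℂ × ℂ ↦ (‖z.1‖ ^ 2, ‖z.2‖ ^ 2))
          (by fun_prop)).aemeasurable
    _ = ENNReal.ofReal (Real.pi ^ 2) *
          ∫⁻ s in Ioi (0 : ℝ), ∫⁻ t in Ioi (0 : ℝ), g s t := by
        simp only [inner_radial]
        rw [lintegral_complex_comp_norm_sq (inner_measurable.const_mul (ENNReal.ofReal Real.pi)),
          lintegral_const_mul _ inner_measurable, ← mul_assoc,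
          ← ENNReal.ofReal_mul Real.pi_pos.le, sq]

theorem lintegral_Ioi_lintegral_Ioi_swap {α : Type*} [LinearOrder α] [TopologicalSpace α]
    [OrderClosedTopology α] [SecondCountableTopology α] [MeasurableSpace α]
    [OpensMeasurableSpace α] {μ ν : Measure α} [SFinite μ] [SFinite ν] (a : α) {g : α → α → ℝ≥0∞}
    (hg : Measurable (Function.uncurry g)) :
    ∫⁻ s in Ioi a, ∫⁻ u in Ioi s, g s u ∂ν ∂μ = ∫⁻ u in Ioi a, ∫⁻ s in Ioo a u, g s u ∂μ ∂ν := by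
  let triangle : Set (α × α) := {p | a < p.1 ∧ p.1 < p.2}
  have triangle_measurable : MeasurableSet triangle :=
    (measurableSet_lt measurable_const measurable_fst).inter
      (measurableSet_lt measurable_fst measurable_snd)
  have row (s : α) : (Ioi a).indicator (fun s ↦ ∫⁻ u in Ioi s, g s u ∂ν) s =
      ∫⁻ u, triangle.indicator (Function.uncurry g) (s, u) ∂ν := by
    by_cases hs : a < s <;>
      simp [← lintegral_indicator measurableSet_Ioi, indicator, triangle, hs]
  have column (u : α) : (Ioi a).indicator (fun u ↦ ∫⁻ s in Ioo a u, g s u ∂μ) u =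
      ∫⁻ s, triangle.indicator (Function.uncurry g) (s, u) ∂μ := by
    by_cases hu : a < u
    · rw [indicator_of_mem (mem_Ioi.2 hu), ← lintegral_indicator measurableSet_Ioo]
      rfl
    · have triangle_empty (s : α) : ¬(a < s ∧ s < u) := fun hs ↦ hu (hs.1.trans hs.2)
      simp [indicator, triangle, hu, triangle_empty]
  rw [← lintegral_indicator measurableSet_Ioi, ← lintegral_indicator measurableSet_Ioi]
  simp only [row, column]
  exact lintegral_lintegral_swap (hg.indicator triangle_measurable).aemeasurable

theorem lintegral_Ioi_comp_sub_right (f : ℝ → ℝ≥0∞) (a s : ℝ) :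
    ∫⁻ u in Ioi (a + s), f (u - s) = ∫⁻ t in Ioi a, f t := by
  rw [← lintegral_indicator measurableSet_Ioi, ← lintegral_indicator measurableSet_Ioi,
    ← lintegral_sub_right_eq_self ((Ioi a).indicator f) s]
  simp only [indicator, mem_Ioi, lt_sub_iff_add_lt]

theorem lintegral_Ioi_lintegral_Ioi_eq_lintegral_Ioo_sub {g : ℝ → ℝ → ℝ≥0∞}
    (hg : Measurable (Function.uncurry g)) :
    ∫⁻ s in Ioi (0 : ℝ), ∫⁻ t in Ioi (0 : ℝ), g s t =
      ∫⁻ u in Ioi (0 : ℝ), ∫⁻ s in Ioo 0 u, g s (u - s) := by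
  have translate (s : ℝ) : ∫⁻ t in Ioi (0 : ℝ), g s t = ∫⁻ u in Ioi s, g s (u - s) := by
    rw [← lintegral_Ioi_comp_sub_right (g s) 0 s, zero_add]
  simp only [translate]
  exact lintegral_Ioi_lintegral_Ioi_swap 0
    (hg.comp (f := fun p : ℝ × ℝ ↦ (p.1, p.2 - p.1)) (by fun_prop))

theorem lintegral_Ioo_rpow_mul_one_sub_rpow {a b : ℝ} (ha : 0 < a) (hb : 0 < b) :
    ∫⁻ x in Ioo (0 : ℝ) 1, ENNReal.ofReal (x ^ (a - 1) * (1 - x) ^ (b - 1)) =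
      ENNReal.ofReal (beta a b) := by
  have hbeta := beta_pos ha hb
  have normalized := lintegral_betaPDF_eq_one ha hb
  simp only [lintegral_betaPDF, mul_assoc, ENNReal.ofReal_mul (one_div_pos.2 hbeta).le]
    at normalized
  rw [lintegral_const_mul _ (by fun_prop), one_div, ENNReal.ofReal_inv_of_pos hbeta] at normalized
  rw [← inv_inv (ENNReal.ofReal (beta a b))]
  exact ENNReal.eq_inv_of_mul_eq_one_left ((mul_comm _ _).trans normalized)

theorem lintegral_Ioo_rpow_mul_sub_rpow {a b u : ℝ} (ha : 0 < a) (hb : 0 < b) (hu : 0 < u) :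
    ∫⁻ s in Ioo 0 u, ENNReal.ofReal (s ^ (a - 1) * (u - s) ^ (b - 1)) =
      ENNReal.ofReal (beta a b * u ^ (a + b - 1)) := by
  have image_mul : (u * ·) '' Ioo 0 1 = Ioo 0 u := by
    rw [image_mul_left_Ioo hu, mul_zero, mul_one]
  have homogeneous {x : ℝ} (hx : x ∈ Ioo (0 : ℝ) 1) :
      u * ((u * x) ^ (a - 1) * (u - u * x) ^ (b - 1)) =
        u ^ (a + b - 1) * (x ^ (a - 1) * (1 - x) ^ (b - 1)) := by
    rw [← mul_one_sub, Real.mul_rpow hu.le hx.1.le, Real.mul_rpow hu.le (sub_pos.2 hx.2).le,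
      show a + b - 1 = 1 + (a - 1) + (b - 1) by ring, Real.rpow_add hu, Real.rpow_add hu,
      Real.rpow_one]
    ring
  calc ∫⁻ s in Ioo 0 u, ENNReal.ofReal (s ^ (a - 1) * (u - s) ^ (b - 1))
      = ∫⁻ x in Ioo (0 : ℝ) 1, ENNReal.ofReal u *
          ENNReal.ofReal ((u * x) ^ (a - 1) * (u - u * x) ^ (b - 1)) := by
        rw [← image_mul]
        exact lintegral_image_eq_lintegral_deriv_mul_of_monotoneOn measurableSet_Ioo
          (fun x _ ↦ (hasDerivAt_const_mul u).hasDerivWithinAt)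
          (fun _ _ _ _ hxy ↦ mul_le_mul_of_nonneg_left hxy hu.le) _
    _ = ∫⁻ x in Ioo (0 : ℝ) 1, ENNReal.ofReal (u ^ (a + b - 1)) *
          ENNReal.ofReal (x ^ (a - 1) * (1 - x) ^ (b - 1)) := by
        refine setLIntegral_congr_fun measurableSet_Ioo fun x hx ↦ ?_
        rw [← ENNReal.ofReal_mul hu.le, homogeneous hx, ENNReal.ofReal_mul (by positivity)]
    _ = ENNReal.ofReal (beta a b * u ^ (a + b - 1)) := by
        rw [lintegral_const_mul _ (by fun_prop), lintegral_Ioo_rpow_mul_one_sub_rpow ha hb,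
          mul_comm, ENNReal.ofReal_mul (beta_pos ha hb).le]

theorem lintegral_Ioi_lintegral_Ioi_comp_add_mul_rpow {F : ℝ → ℝ≥0∞} (hF : Measurable F) {a b : ℝ}
    (ha : 0 < a) (hb : 0 < b) :
    ∫⁻ s in Ioi (0 : ℝ), ∫⁻ t in Ioi (0 : ℝ),
        F (s + t) * ENNReal.ofReal (s ^ (a - 1) * t ^ (b - 1)) =
      ENNReal.ofReal (beta a b) *
        ∫⁻ u in Ioi (0 : ℝ), F u * ENNReal.ofReal (u ^ (a + b - 1)) := by
  rw [lintegral_Ioi_lintegral_Ioi_eq_lintegral_Ioo_sub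
      (g := fun s t ↦ F (s + t) * ENNReal.ofReal (s ^ (a - 1) * t ^ (b - 1)))
      (by simp only [Function.uncurry_def]; fun_prop),
    ← lintegral_const_mul _ (by fun_prop)]
  refine setLIntegral_congr_fun measurableSet_Ioi fun u hu ↦ ?_
  simp only [add_sub_cancel]
  rw [lintegral_const_mul _ (by fun_prop), lintegral_Ioo_rpow_mul_sub_rpow ha hb hu,
    ENNReal.ofReal_mul (beta_pos ha hb).le, mul_left_comm]

theorem lintegral_complex_prod_radial_mul_rpow {F : ℝ → ℝ≥0∞} (hF : Measurable F) {a b : ℝ}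
    (ha : 0 < a) (hb : 0 < b) :
    ∫⁻ z : ℂ × ℂ, F (‖z.1‖ ^ 2 + ‖z.2‖ ^ 2) *
        ENNReal.ofReal ((‖z.1‖ ^ 2) ^ (a - 1) * (‖z.2‖ ^ 2) ^ (b - 1)) =
      ENNReal.ofReal (Real.pi ^ 2 * beta a b) *
        ∫⁻ u in Ioi (0 : ℝ), F u * ENNReal.ofReal (u ^ (a + b - 1)) := by
  rw [lintegral_complex_prod_comp_norm_sq
      (g := fun s t ↦ F (s + t) * ENNReal.ofReal (s ^ (a - 1) * t ^ (b - 1)))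
      (by simp only [Function.uncurry_def]; fun_prop),
    lintegral_Ioi_lintegral_Ioi_comp_add_mul_rpow hF ha hb, ← mul_assoc,
    ← ENNReal.ofReal_mul (by positivity)]

theorem beta_natCast_add_one (j k : ℕ) :
    beta (j + 1) (k + 1) = j ! * k ! / (j + k + 1)! := by
  rw [beta, Real.Gamma_nat_eq_factorial, Real.Gamma_nat_eq_factorial,
    ← Real.Gamma_nat_eq_factorial (j + k + 1)]
  push_cast
  ring_nf

theorem lintegral_complex_prod_radial_mul_pow {F : ℝ → ℝ≥0∞} (hF : Measurable F) (j k : ℕ) :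
    ∫⁻ z : ℂ × ℂ, F (‖z.1‖ ^ 2 + ‖z.2‖ ^ 2) *
        ENNReal.ofReal (‖z.1‖ ^ (2 * j) * ‖z.2‖ ^ (2 * k)) =
      ENNReal.ofReal (Real.pi ^ 2 * (j ! * k ! / (j + k + 1)!)) *
        ∫⁻ u in Ioi (0 : ℝ), F u * ENNReal.ofReal (u ^ (j + k + 1)) := by
  have exponent : (j + 1 + (k + 1) - 1 : ℝ) = (j + k + 1 : ℕ) := by push_cast; ring
  have radial := lintegral_complex_prod_radial_mul_rpow hF j.cast_add_one_pos k.cast_add_one_pos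
  simpa only [add_sub_cancel_right, exponent, Real.rpow_natCast, ← pow_mul, beta_natCast_add_one]
    using radial

/-- The radial profile `W_m` of the weight: `w_m(z) = W_m(|z₁|² + |z₂|²)`. Division by zero gives
it the value `0` at `u = 0` when `0 < m`. -/
noncomputable def radialWeight (m : ℕ) (u : ℝ) : ℝ :=
  Real.exp (-(m * Real.sqrt (u ^ 2 + 1))) * ((1 + Real.sqrt (u ^ 2 + 1)) / u) ^ m

theorem wEH_eq_radialWeight (m : ℕ) (z : ℂ × ℂ) :
    wEH m z = radialWeight m (‖z.1‖ ^ 2 + ‖z.2‖ ^ 2) := rfl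

theorem measurable_radialWeight (m : ℕ) : Measurable (radialWeight m) := by
  unfold radialWeight
  fun_prop

theorem radialWeight_nonneg (m : ℕ) {u : ℝ} (hu : 0 ≤ u) : 0 ≤ radialWeight m u := by
  unfold radialWeight
  positivity

theorem NEH_eq_lintegral_radialWeight (m j k : ℕ) :
    NEH m j k = ENNReal.ofReal (j ! * k ! / (j + k + 1)!) *
      ∫⁻ u in Ioi (0 : ℝ),
        ENNReal.ofReal (radialWeight m u) * ENNReal.ofReal (u ^ (j + k + 1)) := by
  have integrand (z : ℂ × ℂ) : ENNReal.ofReal (wEH m z * ‖z.1‖ ^ (2 * j) * ‖z.2‖ ^ (2 * k)) =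
      ENNReal.ofReal (radialWeight m (‖z.1‖ ^ 2 + ‖z.2‖ ^ 2)) *
        ENNReal.ofReal (‖z.1‖ ^ (2 * j) * ‖z.2‖ ^ (2 * k)) := by
    rw [mul_assoc, wEH_eq_radialWeight, ENNReal.ofReal_mul (radialWeight_nonneg m (by positivity))]
  simp only [NEH, muEH, integrand]
  rw [lintegral_smul_measure, smul_eq_mul,
    lintegral_complex_prod_radial_mul_pow (measurable_radialWeight m).ennreal_ofReal, ← mul_assoc,
    ← ENNReal.ofReal_mul (by positivity), ← mul_assoc (1 / Real.pi ^ 2),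
    one_div_mul_cancel (by positivity), one_mul]

theorem two_mul_mul_radialWeight_sq_mul_pow {m n : ℕ} (hmn : m ≤ n) {r : ℝ} (hr : 0 < r) :
    2 * r * (radialWeight m (r ^ 2) * (r ^ 2) ^ (n + 1)) =
      2 * (Real.exp (-(m * Real.sqrt (r ^ 4 + 1))) * (1 + Real.sqrt (r ^ 4 + 1)) ^ m *
        r ^ (2 * (n - m) + 3)) := by
  obtain ⟨d, rfl⟩ := Nat.exists_eq_add_of_le hmn
  rw [radialWeight, ← pow_mul r 2 2, div_pow, Nat.add_sub_cancel_left]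
  field_simp
  ring

theorem exp_neg_mul_mul_one_add_pow_le (m : ℕ) {x : ℝ} (hx : 0 ≤ x) :
    Real.exp (-(m * x)) * (1 + x) ^ m ≤ 2 ^ m * Real.exp (-(m / 2 * x)) := by
  have one_add_le : 1 + x ≤ 2 * Real.exp (x / 2) := by linarith [Real.add_one_le_exp (x / 2)]
  calc Real.exp (-(m * x)) * (1 + x) ^ m
      ≤ Real.exp (-(m * x)) * (2 * Real.exp (x / 2)) ^ m := by gcongr
    _ = 2 ^ m * Real.exp (-(m / 2 * x)) := by
      rw [mul_pow, ← Real.exp_nat_mul, mul_left_comm, ← Real.exp_add]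
      ring_nf

theorem integrableOn_exp_neg_mul_sqrt_mul_one_add_sqrt_pow_mul_pow {m : ℕ} (hm : 0 < m) (n : ℕ) :
    IntegrableOn (fun r : ℝ ↦ Real.exp (-(m * Real.sqrt (r ^ 4 + 1))) *
      (1 + Real.sqrt (r ^ 4 + 1)) ^ m * r ^ n) (Ioi 0) := by
  have gaussian : IntegrableOn (fun r : ℝ ↦ 2 ^ m * (r ^ (n : ℝ) * Real.exp (-(m / 2) * r ^ 2)))
      (Ioi 0) :=
    (integrableOn_rpow_mul_exp_neg_mul_sq (by positivity)
      (neg_one_lt_zero.trans_le n.cast_nonneg)).const_mul _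
  refine gaussian.mono' (by fun_prop) ?_
  filter_upwards [ae_restrict_mem measurableSet_Ioi] with r (hr : 0 < r)
  have sq_le_sqrt : r ^ 2 ≤ Real.sqrt (r ^ 4 + 1) := Real.le_sqrt_of_sq_le (by linarith)
  rw [Real.norm_of_nonneg (by positivity), Real.rpow_natCast]
  calc Real.exp (-(m * Real.sqrt (r ^ 4 + 1))) * (1 + Real.sqrt (r ^ 4 + 1)) ^ m * r ^ n
      ≤ 2 ^ m * Real.exp (-(m / 2 * Real.sqrt (r ^ 4 + 1))) * r ^ n := by
        gcongr ?_ * r ^ n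
        exact exp_neg_mul_mul_one_add_pow_le m (Real.sqrt_nonneg _)
    _ ≤ 2 ^ m * Real.exp (-(m / 2 * r ^ 2)) * r ^ n := by gcongr
    _ = 2 ^ m * (r ^ n * Real.exp (-(m / 2) * r ^ 2)) := by ring_nf

/-- For `j + k ≥ m` the weighted norm factorizes as
`N_m(j,k) = (2 j! k!/(j+k+1)!) · ∫₀^∞ e^{-m√(r⁴+1)} (1+√(r⁴+1))^m r^{2(j+k-m)+3} dr`. -/
theorem NEH_factorization (m j k : ℕ) (hm : 0 < m) (hjk : m ≤ j + k) :
    NEH m j k = ENNReal.ofReal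
      (2 * (Nat.factorial j) * (Nat.factorial k) / (Nat.factorial (j + k + 1)) *
        ∫ r in Set.Ioi (0 : ℝ),
          Real.exp (-(m * Real.sqrt (r ^ 4 + 1))) * (1 + Real.sqrt (r ^ 4 + 1)) ^ m *
            r ^ (2 * (j + k - m) + 3)) := by
  have constant : (2 * j ! * k ! / (j + k + 1)! : ℝ) = j ! * k ! / (j + k + 1)! * 2 := by ring
  rw [NEH_eq_lintegral_radialWeight, ← lintegral_Ioi_comp_pow two_ne_zero, constant, mul_assoc,
    ← integral_const_mul, ENNReal.ofReal_mul (by positivity),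
    ofReal_integral_eq_lintegral_ofReal
      ((integrableOn_exp_neg_mul_sqrt_mul_one_add_sqrt_pow_mul_pow hm _).const_mul 2)]
  · congr 1
    refine setLIntegral_congr_fun measurableSet_Ioi fun r (hr : 0 < r) ↦ ?_
    rw [← two_mul_mul_radialWeight_sq_mul_pow hjk hr, Nat.cast_ofNat, Nat.add_one_sub_one, pow_one,
      ← ENNReal.ofReal_mul (radialWeight_nonneg m (by positivity)),
      ← ENNReal.ofReal_mul (by positivity)]
  · filter_upwards [ae_restrict_mem measurableSet_Ioi] with r (hr : 0 < r)
    simp only [Pi.zero_apply]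
    positivity
end

section
/- For every positive integer m, 4(m+3) · ∫₀^∞ e^{−m√(r⁴+1)} (1+√(r⁴+1))^m r³ dr ≠ m(m+1) · ∫₀^∞ e^{−m√(r⁴+1)} (1+√(r⁴+1))^m r⁷ dr. (Equivalently, 4·N_m(m,0) ≠ m·N_m(m+2,0), which is the obstruction to the balanced condition for m·g_EH obtained by comparing the coefficients of |z₁|^{2m} and |z₁|^{2(m+2)}.) -/
open MeasureTheory

/-!
Substituting `u = m (1 + √(r⁴ + 1))` turns both integrals into integrals over `(2m, ∞)` of a
polynomial against `e⁻ᵘ`. Integration by parts reduces these to the incomplete Gamma value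
`G = Γ(m + 1, 2m)` and the boundary term `E = (2m)ᵐ⁺¹ e⁻²ᵐ`, and the right-hand side exceeds the
left-hand side by a positive multiple of `(m² - m + 6) E - (m³ + m - 6) G`.

The two terms agree up to a relative error `O(m⁻³)`, so a sharp upper bound for `G` is needed. It is
the third convergent of the continued fraction
`Γ(n + 1, x) = xⁿ⁺¹ e⁻ˣ / (x - n + n / (x - n + 2 + 2(n - 1) / (x - n + 4 + ⋯)))`.
-/

open Polynomial Set Filter

theorem isLittleO_eval_exp_mul (p : ℝ[X]) {b : ℝ} (hb : 0 < b) :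
    (fun u ↦ p.eval u) =o[atTop] fun u ↦ Real.exp (b * u) := by
  induction p using Polynomial.induction_on' with
  | add p q hp hq => simpa only [eval_add] using hp.add hq
  | monomial n c =>
    simpa only [eval_monomial] using (isLittleO_pow_exp_pos_mul_atTop n hb).const_mul_left c

theorem integrableOn_Ioi_eval_mul_exp_neg (p : ℝ[X]) (x : ℝ) :
    IntegrableOn (fun u ↦ p.eval u * Real.exp (-u)) (Ioi x) := by
  refine integrable_of_isBigO_exp_neg one_half_pos (by fun_prop) ?_
  refine ((isLittleO_eval_exp_mul p one_half_pos).isBigO.mul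
    (Asymptotics.isBigO_refl (fun u ↦ Real.exp (-u)) atTop)).congr_right fun u ↦ ?_
  rw [← Real.exp_add]
  ring_nf

/-- The functional `p ↦ ∫ₓ^∞ p(u) e⁻ᵘ du` on real polynomials. Its value at `X ^ n` is the upper
incomplete Gamma function `Γ(n + 1, x)`. -/
noncomputable def expTail (x : ℝ) : ℝ[X] →ₗ[ℝ] ℝ where
  toFun p := ∫ u in Ioi x, p.eval u * Real.exp (-u)
  map_add' p q := by
    simp only [eval_add, add_mul]
    exact integral_add (integrableOn_Ioi_eval_mul_exp_neg p x)
      (integrableOn_Ioi_eval_mul_exp_neg q x)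
  map_smul' c p := by
    simp only [eval_smul, smul_eq_mul, mul_assoc, integral_const_mul, RingHom.id_apply]

theorem expTail_apply (x : ℝ) (p : ℝ[X]) :
    expTail x p = ∫ u in Ioi x, p.eval u * Real.exp (-u) :=
  rfl

theorem expTail_C_mul (x c : ℝ) (p : ℝ[X]) : expTail x (C c * p) = c * expTail x p := by
  rw [← smul_eq_C_mul, map_smul, smul_eq_mul]

theorem expTail_nonneg {x : ℝ} {p : ℝ[X]} (hp : ∀ u, x < u → 0 ≤ p.eval u) : 0 ≤ expTail x p :=
  setIntegral_nonneg measurableSet_Ioi fun u hu ↦ mul_nonneg (hp u hu) (Real.exp_pos _).le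

theorem expTail_eq_expTail_derivative_add (x : ℝ) (p : ℝ[X]) :
    expTail x p = expTail x (derivative p) + p.eval x * Real.exp (-x) := by
  have hderiv : ∀ u ∈ Ici x, HasDerivAt (fun u ↦ p.eval u * Real.exp (-u))
      ((derivative p - p).eval u * Real.exp (-u)) u := fun u _ ↦ by
    refine ((p.hasDerivAt u).mul (hasDerivAt_neg u).exp).congr_deriv ?_
    rw [eval_sub]
    ring
  have hlim : Tendsto (fun u ↦ p.eval u * Real.exp (-u)) atTop (nhds 0) := by
    simpa only [div_eq_mul_inv, Real.exp_neg] using p.tendsto_div_exp_atTop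
  have hparts : expTail x (derivative p - p) = 0 - p.eval x * Real.exp (-x) :=
    integral_Ioi_of_hasDerivAt_of_tendsto' hderiv (integrableOn_Ioi_eval_mul_exp_neg _ x) hlim
  rw [map_sub] at hparts
  linarith

theorem expTail_X_pow_succ (x : ℝ) (n : ℕ) :
    expTail x (X ^ (n + 1)) = (n + 1) * expTail x (X ^ n) + x ^ (n + 1) * Real.exp (-x) := by
  rw [expTail_eq_expTail_derivative_add, derivative_X_pow_succ, expTail_C_mul,
    eval_pow, eval_X]

theorem X_mul_iterate_derivative_succ_X_pow (n k : ℕ) :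
    X * derivative^[k + 1] (X ^ n : ℝ[X]) = C ((n : ℝ) - k) * derivative^[k] (X ^ n) := by
  induction k with
  | zero =>
    cases n with
    | zero => simp
    | succ n => simp; ring
  | succ k ih =>
    have hderiv := congrArg derivative ih
    rw [derivative_mul, derivative_X, derivative_C_mul, ← Function.iterate_succ_apply' derivative,
      ← Function.iterate_succ_apply' derivative] at hderiv
    push_cast at hderiv ⊢
    simp only [map_sub, map_add, map_one] at hderiv ⊢
    linear_combination hderiv

/-- The integral `∫ₓ^∞ (u - x)ᵏ (uⁿ)⁽ᵏ⁾ e⁻ᵘ du`. For fixed `n` and `x` these satisfy the three-term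
recurrence in `k` underlying the continued fraction of `Γ(n + 1, x)`. -/
noncomputable def gammaTail (n : ℕ) (x : ℝ) (k : ℕ) : ℝ :=
  expTail x ((X - C x) ^ k * derivative^[k] (X ^ n))

theorem gammaTail_zero (n : ℕ) (x : ℝ) : gammaTail n x 0 = expTail x (X ^ n) := by
  rw [gammaTail, pow_zero, one_mul, Function.iterate_zero_apply]

theorem gammaTail_nonneg (n k : ℕ) {x : ℝ} (hx : 0 ≤ x) : 0 ≤ gammaTail n x k := by
  refine expTail_nonneg fun u hu ↦ ?_
  have hu₀ : 0 ≤ u := hx.trans hu.le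
  rw [iterate_derivative_X_pow_eq_C_mul]
  simp only [eval_mul, eval_pow, eval_sub, eval_X, eval_C]
  exact mul_nonneg (pow_nonneg (sub_nonneg.2 hu.le) k) (by positivity)

theorem gammaTail_one_add (n : ℕ) (x : ℝ) :
    gammaTail n x 1 + (x - n) * gammaTail n x 0 = x ^ (n + 1) * Real.exp (-x) := by
  have hparts := expTail_eq_expTail_derivative_add x (X ^ n)
  have hpoly : (X - C x) ^ 1 * derivative^[1] (X ^ n : ℝ[X])
      = C (n : ℝ) * X ^ n - C x * derivative (X ^ n) := by
    have heuler := X_mul_iterate_derivative_succ_X_pow n 0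
    simp only [Nat.cast_zero, sub_zero, zero_add, Function.iterate_one, Function.iterate_zero_apply]
      at heuler ⊢
    linear_combination heuler
  rw [gammaTail_zero, gammaTail, hpoly, map_sub, expTail_C_mul, expTail_C_mul]
  rw [eval_pow, eval_X] at hparts
  linear_combination x * hparts

theorem gammaTail_add_two_add (n k : ℕ) (x : ℝ) :
    gammaTail n x (k + 2) + (x - n + 2 * (k + 1)) * gammaTail n x (k + 1)
      = (k + 1) * (n - k) * gammaTail n x k := by
  have hparts := expTail_eq_expTail_derivative_add x
    ((X - C x) ^ (k + 1) * derivative^[k + 1] (X ^ n))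
  -- Replace `x` by `X - (X - C x)` and absorb each factor `X` into a derivative of `X ^ n`.
  have hpoly : C x * derivative ((X - C x) ^ (k + 1) * derivative^[k + 1] (X ^ n : ℝ[X]))
      = C ((k + 1) * ((n : ℝ) - k)) * ((X - C x) ^ k * derivative^[k] (X ^ n))
        + C ((n : ℝ) - 2 * (k + 1)) * ((X - C x) ^ (k + 1) * derivative^[k + 1] (X ^ n))
        - (X - C x) ^ (k + 2) * derivative^[k + 2] (X ^ n) := by
    have heuler := X_mul_iterate_derivative_succ_X_pow n k
    have heuler_succ := X_mul_iterate_derivative_succ_X_pow n (k + 1)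
    rw [derivative_mul, derivative_X_sub_C_pow, ← Function.iterate_succ_apply' derivative]
    simp only [Nat.cast_add, Nat.cast_one, map_add, map_sub, map_mul, map_one, map_ofNat,
      Nat.add_sub_cancel] at heuler heuler_succ ⊢
    linear_combination (C (k : ℝ) + 1) * (X - C x) ^ k * heuler + (X - C x) ^ (k + 1) * heuler_succ
  have hzero : ((X - C x) ^ (k + 1) * derivative^[k + 1] (X ^ n : ℝ[X])).eval x = 0 := by simp
  rw [hzero, zero_mul, add_zero] at hparts
  have hexp := congrArg (expTail x) hpoly
  rw [map_sub, map_add, expTail_C_mul, expTail_C_mul, expTail_C_mul, ← hparts] at hexp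
  unfold gammaTail
  linear_combination hexp

theorem expTail_X_pow_le_third_convergent (n : ℕ) {x : ℝ} (hx : 0 ≤ x) :
    ((x - n) * ((x - n + 2) * (x - n + 4) + 2 * (n - 1)) + n * (x - n + 4)) * expTail x (X ^ n)
      ≤ ((x - n + 2) * (x - n + 4) + 2 * (n - 1)) * (x ^ (n + 1) * Real.exp (-x)) := by
  have hrec₀ := gammaTail_one_add n x
  have hrec₁ : gammaTail n x 2 + (x - n + 2) * gammaTail n x 1 = n * gammaTail n x 0 := by
    linear_combination gammaTail_add_two_add n 0 x
  have hrec₂ : gammaTail n x 3 + (x - n + 4) * gammaTail n x 2 = 2 * (n - 1) * gammaTail n x 1 := by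
    linear_combination gammaTail_add_two_add n 1 x
  rw [← gammaTail_zero]
  linear_combination gammaTail_nonneg n 3 hx - (x - n + 4) * hrec₁ + hrec₂
    + ((x - n + 2) * (x - n + 4) + 2 * (n - 1)) * hrec₀

theorem hasDerivAt_mul_one_add_sqrt_pow_four_add_one (a r : ℝ) :
    HasDerivAt (fun r : ℝ ↦ a * (1 + √(r ^ 4 + 1))) (a * (2 * r ^ 3 / √(r ^ 4 + 1))) r := by
  have hpow : HasDerivAt (fun r : ℝ ↦ r ^ 4 + 1) (4 * r ^ 3) r := by
    simpa using (hasDerivAt_pow 4 r).add_const (1 : ℝ)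
  refine (((hpow.sqrt (by positivity)).const_add 1).const_mul a).congr_deriv ?_
  field_simp
  ring

theorem strictMonoOn_mul_one_add_sqrt_pow_four_add_one {a : ℝ} (ha : 0 < a) :
    StrictMonoOn (fun r : ℝ ↦ a * (1 + √(r ^ 4 + 1))) (Ici 0) := by
  intro r (hr : 0 ≤ r) s _ hrs
  dsimp only
  gcongr

theorem image_mul_one_add_sqrt_pow_four_add_one_Ioi {a : ℝ} (ha : 0 < a) :
    (fun r : ℝ ↦ a * (1 + √(r ^ 4 + 1))) '' Ioi 0 = Ioi (2 * a) := by
  have htop : Tendsto (fun r : ℝ ↦ a * (1 + √(r ^ 4 + 1))) atTop atTop :=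
    (tendsto_atTop_add_const_left _ _ (Real.tendsto_sqrt_atTop.comp
      (tendsto_atTop_add_const_right _ _ (tendsto_pow_atTop four_ne_zero)))).const_mul_atTop ha
  rw [ContinuousOn.image_Ioi_of_strictMonoOn (by fun_prop)
    (strictMonoOn_mul_one_add_sqrt_pow_four_add_one ha) htop]
  norm_num [mul_comm, one_add_one_eq_two]

theorem integral_comp_mul_one_add_sqrt_pow_four_add_one (g : ℝ → ℝ) {a : ℝ} (ha : 0 < a) :
    ∫ r in Ioi (0 : ℝ), g (a * (1 + √(r ^ 4 + 1))) * r ^ 3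
      = (2 * a ^ 2)⁻¹ * ∫ u in Ioi (2 * a), (u - a) * g u := by
  rw [← image_mul_one_add_sqrt_pow_four_add_one_Ioi ha,
    integral_image_eq_integral_deriv_smul_of_monotoneOn measurableSet_Ioi
      (fun r _ ↦ (hasDerivAt_mul_one_add_sqrt_pow_four_add_one a r).hasDerivWithinAt)
      ((strictMonoOn_mul_one_add_sqrt_pow_four_add_one ha).monotoneOn.mono Ioi_subset_Ici_self),
    ← integral_const_mul]
  congr 1 with r
  rw [smul_eq_mul]
  field_simp
  ring

theorem exp_neg_mul_sqrt_mul_pow_eq {m : ℕ} (hm : 0 < m) (j : ℕ) (r : ℝ) :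
    Real.exp (-(m * √(r ^ 4 + 1))) * (1 + √(r ^ 4 + 1)) ^ m * r ^ (4 * j + 3)
      = Real.exp m / m ^ (m + 2 * j) * (Real.exp (-(m * (1 + √(r ^ 4 + 1))))
        * (m * (1 + √(r ^ 4 + 1))) ^ (m + j) * (m * (1 + √(r ^ 4 + 1)) - 2 * m) ^ j) * r ^ 3 := by
  have hr : r ^ 4 = (1 + √(r ^ 4 + 1)) * (√(r ^ 4 + 1) - 1) := by
    linear_combination -Real.sq_sqrt (show 0 ≤ r ^ 4 + 1 by positivity)
  have hexp : Real.exp (-(m * √(r ^ 4 + 1)))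
      = Real.exp m * Real.exp (-(m * (1 + √(r ^ 4 + 1)))) := by
    rw [← Real.exp_add]
    ring_nf
  have hfactor : m * (1 + √(r ^ 4 + 1)) - 2 * m = m * (√(r ^ 4 + 1) - 1) := by ring
  rw [hexp, hfactor, pow_add r, pow_mul]
  nth_rw 3 [hr]
  simp only [mul_pow, pow_add, two_mul]
  field_simp

theorem integral_exp_neg_mul_sqrt_mul_pow_eq_expTail {m : ℕ} (hm : 0 < m) (j : ℕ) :
    ∫ r in Ioi (0 : ℝ),
        Real.exp (-(m * √(r ^ 4 + 1))) * (1 + √(r ^ 4 + 1)) ^ m * r ^ (4 * j + 3)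
      = Real.exp m / (2 * m ^ (m + 2 * j + 2))
        * expTail (2 * m) (X ^ (m + j) * (X - C (m : ℝ)) * (X - C (2 * m : ℝ)) ^ j) := by
  have hm₀ : (0 : ℝ) < m := Nat.cast_pos.2 hm
  simp only [exp_neg_mul_sqrt_mul_pow_eq hm]
  rw [integral_comp_mul_one_add_sqrt_pow_four_add_one (fun u ↦ Real.exp m / m ^ (m + 2 * j)
      * (Real.exp (-u) * u ^ (m + j) * (u - 2 * m) ^ j)) hm₀,
    expTail_apply, ← integral_const_mul, ← integral_const_mul]
  congr 1 with u
  simp only [eval_mul, eval_pow, eval_sub, eval_X, eval_C]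
  field_simp
  ring

theorem expTail_two_mul_X_pow_lt {m : ℕ} (hm : 0 < m) :
    ((m : ℝ) ^ 3 + m - 6) * expTail (2 * m) (X ^ m)
      < ((m : ℝ) ^ 2 - m + 6) * ((2 * m) ^ (m + 1) * Real.exp (-(2 * m))) := by
  have hm₁ : (1 : ℝ) ≤ m := Nat.one_le_cast.2 hm
  have htail : 0 ≤ expTail (2 * m) (X ^ m) := by
    rw [← gammaTail_zero]
    exact gammaTail_nonneg m 0 (by positivity)
  have hconvergent := expTail_X_pow_le_third_convergent m (x := 2 * m) (by positivity)
  have hboundary : (0 : ℝ) < (2 * m) ^ (m + 1) * Real.exp (-(2 * m)) := by positivity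
  generalize expTail (2 * m) (X ^ m) = G at *
  generalize ((2 : ℝ) * m) ^ (m + 1) * Real.exp (-(2 * m)) = E at *
  generalize (m : ℝ) = t at *
  rcases le_total (t ^ 3 + t - 6) 0 with hneg | hpos
  · exact (mul_nonpos_of_nonpos_of_nonneg hneg htail).trans_lt
      (mul_pos (by nlinarith) hboundary)
  · have hden : 0 < t * (t ^ 2 + 9 * t + 10) := by positivity
    refine lt_of_mul_lt_mul_left ?_ hden.le
    calc t * (t ^ 2 + 9 * t + 10) * ((t ^ 3 + t - 6) * G)
        ≤ (t ^ 3 + t - 6) * ((t ^ 2 + 8 * t + 6) * E) := by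
          linear_combination (t ^ 3 + t - 6) * hconvergent
      _ < (t ^ 3 + t - 6) * ((t ^ 2 + 8 * t + 6) * E) + (42 * t ^ 2 + 102 * t + 36) * E :=
          lt_add_of_pos_right _ (by positivity)
      _ = t * (t ^ 2 + 9 * t + 10) * ((t ^ 2 - t + 6) * E) := by ring

theorem expTail_two_mul_X_pow_mul_X_sub_C_lt {m : ℕ} (hm : 0 < m) :
    4 * m * (m + 3) * expTail (2 * m) (X ^ m * (X - C (m : ℝ)))
      < (m + 1) * expTail (2 * m) (X ^ (m + 1) * (X - C (m : ℝ)) * (X - C (2 * m : ℝ))) := by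
  have hlinear : X ^ m * (X - C (m : ℝ)) = X ^ (m + 1) - C (m : ℝ) * X ^ m := by ring
  have hcubic : X ^ (m + 1) * (X - C (m : ℝ)) * (X - C (2 * m : ℝ))
      = X ^ (m + 3) - C (3 * m : ℝ) * X ^ (m + 2) + C (2 * m ^ 2 : ℝ) * X ^ (m + 1) := by
    simp only [map_mul, map_pow, map_ofNat]
    ring
  have hmoment₁ := expTail_X_pow_succ (2 * m) m
  have hmoment₂ := expTail_X_pow_succ (2 * m) (m + 1)
  have hmoment₃ := expTail_X_pow_succ (2 * m) (m + 2)
  push_cast at hmoment₂ hmoment₃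
  rw [hlinear, hcubic, map_sub, map_add, map_sub]
  simp only [expTail_C_mul]
  rw [hmoment₃, hmoment₂, hmoment₁]
  linear_combination expTail_two_mul_X_pow_lt hm

/-- For every positive integer `m`,
`4(m+3) ∫₀^∞ e^{-m√(r⁴+1)}(1+√(r⁴+1))^m r³ dr ≠ m(m+1) ∫₀^∞ e^{-m√(r⁴+1)}(1+√(r⁴+1))^m r⁷ dr`,
the obstruction to the balanced condition for `m·g_EH`. -/
theorem balanced_obstruction_integrals (m : ℕ) (hm : 0 < m) :
    4 * ((m : ℝ) + 3) *
        ∫ r in Set.Ioi (0 : ℝ),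
          Real.exp (-(m * Real.sqrt (r ^ 4 + 1))) * (1 + Real.sqrt (r ^ 4 + 1)) ^ m * r ^ 3
      ≠ (m : ℝ) * ((m : ℝ) + 1) *
        ∫ r in Set.Ioi (0 : ℝ),
          Real.exp (-(m * Real.sqrt (r ^ 4 + 1))) * (1 + Real.sqrt (r ^ 4 + 1)) ^ m * r ^ 7 := by
  apply ne_of_lt
  have hcube := integral_exp_neg_mul_sqrt_mul_pow_eq_expTail hm 0
  have hseventh := integral_exp_neg_mul_sqrt_mul_pow_eq_expTail hm 1
  simp only [mul_zero, mul_one, zero_add, add_zero, pow_zero, pow_one, Nat.reduceAdd]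
    at hcube hseventh
  rw [hcube, hseventh]
  have hscale : 0 < Real.exp m / (2 * (m : ℝ) ^ (m + 3)) := by positivity
  convert mul_lt_mul_of_pos_left (expTail_two_mul_X_pow_mul_X_sub_C_lt hm) hscale using 1 <;>
  · field_simp
    ring
end

section
/- For every positive integer m, 4m(m+3) · (Γ(m+2, 2m) − m·Γ(m+1, 2m)) ≠ (m+1) · (Γ(m+4, 2m) − 3m·Γ(m+3, 2m) + 2m²·Γ(m+2, 2m)). (This is the incomplete-Gamma form of the inequality showing that the two candidate values of the balanced constant C are incompatible.) -/
open MeasureTheory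

/-- The upper incomplete Gamma function `Γ(a,x) = ∫_x^∞ t^{a-1} e^{-t} dt`. -/
noncomputable def GammaInc (a x : ℝ) : ℝ :=
  ∫ t in Set.Ioi x, t ^ (a - 1) * Real.exp (-t)

/-!
Put `G = Γ(m+1, 2m)` and `E = (2m)^(m+1) e^(-2m)`. The recurrence
`Γ(s+1, x) = s Γ(s, x) + x^s e^(-x)` turns the difference of the two sides into
`(m³ + m - 6) G - (m² - m + 6) E`, which is negative for every real `m > 0`. Indeed
`G K(2m) ≤ E` whenever `K > 0` on `[2m, ∞)` satisfies the Riccati inequality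
`K (K + m + 1 - x) ≤ x K'`, because then `x^(m+1) e^(-x) / K` decreases at least as fast as
`Γ(m+1, x)`. Such `K` come from Legendre's continued fraction for `x^(m+1) e^(-x) / Γ(m+1, x)`:
its first convergent `x - m` is sharp enough for `m < 2`, its third one for `m ≥ 2`.
-/

section

open Set Filter Topology

theorem setIntegral_Ioi_le_of_hasDerivAt_le_neg {f F F' : ℝ → ℝ} {c : ℝ}
    (hf : IntegrableOn f (Ioi c)) (hF : ∀ x ∈ Ici c, HasDerivAt F (F' x) x)
    (hF' : ∀ x ∈ Ioi c, F' x ≤ -f x) (hF_nonneg : ∀ x ∈ Ici c, 0 ≤ F x) :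
    ∫ x in Ioi c, f x ≤ F c := by
  have integral_le (b : ℝ) (hb : c ≤ b) : ∫ x in c..b, f x ≤ F c := by
    have hsub : ∫ x in c..b, f x ≤ -F b - -F c := by
      refine intervalIntegral.integral_le_sub_of_hasDeriv_right_of_le hb
        (fun x hx ↦ (hF x hx.1).neg.continuousAt.continuousWithinAt)
        (fun x hx ↦ (hF x hx.1.le).neg.hasDerivWithinAt) ?_
        (fun x hx ↦ le_neg_of_le_neg (hF' x hx.1))
      exact (integrableOn_Icc_iff_integrableOn_Ioc).2 (hf.mono_set Ioc_subset_Ioi_self)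
    linarith [hF_nonneg b hb]
  refine le_of_tendsto (intervalIntegral_tendsto_integral_Ioi c hf tendsto_id) ?_
  filter_upwards [eventually_ge_atTop c] with b hb using integral_le b hb

theorem integrableOn_Ioi_rpow_mul_exp_neg (s : ℝ) {c : ℝ} (hc : 0 < c) :
    IntegrableOn (fun t : ℝ ↦ t ^ s * Real.exp (-t)) (Ioi c) := by
  refine integrable_of_isBigO_exp_neg one_half_pos ?_ ?_
  · exact (continuousOn_id.rpow_const fun t ht ↦ Or.inl (hc.trans_le ht).ne').mul
      (Real.continuous_exp.comp continuous_neg).continuousOn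
  · simpa only [mul_comm] using (Real.Gamma_integrand_isLittleO s).isBigO

theorem hasDerivAt_rpow_mul_exp_neg (s : ℝ) {x : ℝ} (hx : x ≠ 0) :
    HasDerivAt (fun t : ℝ ↦ t ^ s * Real.exp (-t))
      (s * (x ^ (s - 1) * Real.exp (-x)) - x ^ s * Real.exp (-x)) x := by
  refine ((Real.hasDerivAt_rpow_const (Or.inl hx)).mul (hasDerivAt_neg x).exp).congr_deriv ?_
  ring

theorem gammaInc_pos (s : ℝ) {c : ℝ} (hc : 0 < c) : 0 < GammaInc s c := by
  have integrand_pos : ∀ t ∈ Ioi c, 0 < t ^ (s - 1) * Real.exp (-t) := fun t ht ↦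
    mul_pos (Real.rpow_pos_of_pos (hc.trans ht) _) (Real.exp_pos _)
  have support_inter : Function.support (fun t : ℝ ↦ t ^ (s - 1) * Real.exp (-t)) ∩ Ioi c = Ioi c :=
    inter_eq_right.2 fun t ht ↦ (integrand_pos t ht).ne'
  rw [GammaInc, setIntegral_pos_iff_support_of_nonneg_ae _
    (integrableOn_Ioi_rpow_mul_exp_neg (s - 1) hc), support_inter]
  · simp
  · exact ae_restrict_of_forall_mem measurableSet_Ioi fun t ht ↦ (integrand_pos t ht).le

theorem gammaInc_add_one (s : ℝ) {c : ℝ} (hc : 0 < c) :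
    GammaInc (s + 1) c = s * GammaInc s c + c ^ s * Real.exp (-c) := by
  have integrable_left := (integrableOn_Ioi_rpow_mul_exp_neg (s - 1) hc).const_mul s
  have integrable_right := integrableOn_Ioi_rpow_mul_exp_neg s hc
  have tendsto_zero : Tendsto (fun t : ℝ ↦ t ^ s * Real.exp (-t)) atTop (𝓝 0) := by
    simpa only [neg_one_mul] using tendsto_rpow_mul_exp_neg_mul_atTop_nhds_zero s 1 one_pos
  have by_parts := integral_Ioi_of_hasDerivAt_of_tendsto'
    (fun t ht ↦ hasDerivAt_rpow_mul_exp_neg s (hc.trans_le ht).ne')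
    (integrable_left.sub integrable_right) tendsto_zero
  rw [integral_sub integrable_left integrable_right, integral_const_mul] at by_parts
  simp only [GammaInc, add_sub_cancel_right]
  linarith

theorem gammaInc_mul_le_of_riccati {s c : ℝ} (hc : 0 < c) {K K' : ℝ → ℝ}
    (hK : ∀ x ∈ Ici c, HasDerivAt K (K' x) x) (hK_pos : ∀ x ∈ Ici c, 0 < K x)
    (riccati : ∀ x ∈ Ioi c, K x * (K x + s - x) ≤ x * K' x) :
    GammaInc s c * K c ≤ c ^ s * Real.exp (-c) := by
  rw [← le_div_iff₀ (hK_pos c self_mem_Ici)]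
  refine setIntegral_Ioi_le_of_hasDerivAt_le_neg (integrableOn_Ioi_rpow_mul_exp_neg (s - 1) hc)
    (fun x hx ↦ (hasDerivAt_rpow_mul_exp_neg s (hc.trans_le hx).ne').div (hK x hx)
      (hK_pos x hx).ne')
    (fun x hx ↦ ?_) (fun x hx ↦ ?_)
  · have hx_pos : 0 < x := hc.trans hx
    have rpow_eq : x ^ s = x ^ (s - 1) * x := by
      rw [← Real.rpow_add_one hx_pos.ne', sub_add_cancel]
    have weight_nonneg : 0 ≤ x ^ (s - 1) * Real.exp (-x) := by positivity
    rw [div_le_iff₀ (pow_pos (hK_pos x (mem_Ici_of_Ioi hx)) 2), rpow_eq]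
    linarith [mul_le_mul_of_nonneg_left (riccati x hx) weight_nonneg]
  · have hx_pos : 0 < x := hc.trans_le hx
    exact div_nonneg (by positivity) (hK_pos x hx).le

theorem gammaInc_add_one_mul_sub_le {a x : ℝ} (ha : 0 ≤ a) (hax : a < x) :
    GammaInc (a + 1) x * (x - a) ≤ x ^ (a + 1) * Real.exp (-x) := by
  refine gammaInc_mul_le_of_riccati (K := fun t ↦ t - a) (K' := fun _ ↦ 1) (ha.trans_lt hax)
    (fun t _ ↦ (hasDerivAt_id t).sub_const a) (fun t ht ↦ sub_pos.2 (hax.trans_le ht))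
    (fun t _ ↦ ?_)
  linarith

/-- The third convergent `y + a / (y + 2 + 2 (a - 1) / (y + 4))` of Legendre's continued fraction
for `x ^ (a + 1) * e ^ (-x) / Γ(a + 1, x)`, in terms of `y = x - a` and with the two inner
fractions cleared, so that no denominator vanishes for `a, y ≥ 0`. -/
noncomputable def legendreThirdConvergent (a y : ℝ) : ℝ :=
  y + a * (y + 4) / (y ^ 2 + 6 * y + 6 + 2 * a)

theorem legendreThirdConvergent_pos {a y : ℝ} (ha : 0 ≤ a) (hy : 0 ≤ y) (hay : 0 < y + a) :
    0 < legendreThirdConvergent a y := by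
  rw [legendreThirdConvergent]
  rcases hy.eq_or_lt with rfl | hy
  · have : 0 < a := by simpa using hay
    positivity
  · positivity

theorem hasDerivAt_legendreThirdConvergent {a y : ℝ} (ha : 0 ≤ a) (hy : 0 ≤ y) :
    HasDerivAt (legendreThirdConvergent a)
      (1 + a * (2 * a - y ^ 2 - 8 * y - 18) / (y ^ 2 + 6 * y + 6 + 2 * a) ^ 2) y := by
  have hnum : HasDerivAt (fun y ↦ a * (y + 4)) (a * 1) y :=
    ((hasDerivAt_id y).add_const 4).const_mul a
  have hden : HasDerivAt (fun y ↦ y ^ 2 + 6 * y + 6 + 2 * a) (2 * y + 6) y :=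
    ((((hasDerivAt_pow 2 y).add ((hasDerivAt_id y).const_mul 6)).add_const 6).add_const
      (2 * a)).congr_deriv (by simp)
  refine ((hasDerivAt_id y).add (hnum.div hden (by positivity))).congr_deriv ?_
  ring

theorem legendreThirdConvergent_riccati {a y : ℝ} (ha : 0 ≤ a) (ha' : 0 ≤ (a - 1) * (a - 2))
    (hy : 0 ≤ y) :
    legendreThirdConvergent a y * (legendreThirdConvergent a y + 1 - y) ≤
      (y + a) * (1 + a * (2 * a - y ^ 2 - 8 * y - 18) / (y ^ 2 + 6 * y + 6 + 2 * a) ^ 2) := by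
  have defect :
      (y + a) * (1 + a * (2 * a - y ^ 2 - 8 * y - 18) / (y ^ 2 + 6 * y + 6 + 2 * a) ^ 2) -
          legendreThirdConvergent a y * (legendreThirdConvergent a y + 1 - y) =
        6 * a * ((a - 1) * (a - 2)) / (y ^ 2 + 6 * y + 6 + 2 * a) ^ 2 := by
    rw [legendreThirdConvergent]
    field_simp
    ring
  rw [← sub_nonneg, defect]
  positivity

theorem gammaInc_add_one_mul_legendreThirdConvergent_le {a x : ℝ} (ha : 0 ≤ a)
    (ha' : 0 ≤ (a - 1) * (a - 2)) (hx : 0 < x) (hax : a ≤ x) :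
    GammaInc (a + 1) x * legendreThirdConvergent a (x - a) ≤ x ^ (a + 1) * Real.exp (-x) := by
  refine gammaInc_mul_le_of_riccati (K := fun t ↦ legendreThirdConvergent a (t - a)) hx
    (fun t ht ↦ (hasDerivAt_legendreThirdConvergent ha (sub_nonneg.2 (hax.trans ht))).comp_sub_const
      t a)
    (fun t ht ↦ legendreThirdConvergent_pos ha (sub_nonneg.2 (hax.trans ht)) ?_) (fun t ht ↦ ?_)
  · rw [sub_add_cancel]
    exact hx.trans_le ht
  · convert legendreThirdConvergent_riccati ha ha' (sub_nonneg.2 (hax.trans ht.le)) using 2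
    · ring
    · rw [sub_add_cancel]

theorem balanced_difference_eq {m : ℝ} (hm : 0 < m) :
    4 * m * (m + 3) * (GammaInc (m + 2) (2 * m) - m * GammaInc (m + 1) (2 * m)) -
        (m + 1) * (GammaInc (m + 4) (2 * m) - 3 * m * GammaInc (m + 3) (2 * m) +
          2 * m ^ 2 * GammaInc (m + 2) (2 * m)) =
      (m ^ 3 + m - 6) * GammaInc (m + 1) (2 * m) -
        (m ^ 2 - m + 6) * ((2 * m) ^ (m + 1) * Real.exp (-(2 * m))) := by
  have hx : 0 < 2 * m := by positivity
  rw [show m + 4 = m + 1 + 1 + 1 + 1 by ring, show m + 3 = m + 1 + 1 + 1 by ring,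
    show m + 2 = m + 1 + 1 by ring]
  simp only [gammaInc_add_one _ hx, Real.rpow_add_one hx.ne']
  ring

theorem exists_gammaInc_mul_le_and_lt_mul {m : ℝ} (hm : 0 < m) :
    ∃ K, GammaInc (m + 1) (2 * m) * K ≤ (2 * m) ^ (m + 1) * Real.exp (-(2 * m)) ∧
      m ^ 3 + m - 6 < (m ^ 2 - m + 6) * K := by
  have sub_eq : 2 * m - m = m := by ring
  rcases lt_or_ge m 2 with hm2 | hm2
  · refine ⟨m, ?_, by nlinarith⟩
    simpa only [sub_eq] using gammaInc_add_one_mul_sub_le (x := 2 * m) hm.le (by linarith)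
  · refine ⟨legendreThirdConvergent m m, ?_, ?_⟩
    · simpa only [sub_eq] using gammaInc_add_one_mul_legendreThirdConvergent_le (x := 2 * m) hm.le
        (mul_nonneg (by linarith) (by linarith)) (by linarith) (by linarith)
    · have gap : (m ^ 2 - m + 6) * legendreThirdConvergent m m - (m ^ 3 + m - 6) =
          (42 * m ^ 2 + 102 * m + 36) / (m ^ 2 + 6 * m + 6 + 2 * m) := by
        rw [legendreThirdConvergent]
        field_simp
        ring
      rw [← sub_pos, gap]
      positivity

theorem balanced_obstruction_gamma_general {m : ℝ} (hm : 0 < m) :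
    4 * m * (m + 3) * (GammaInc (m + 2) (2 * m) - m * GammaInc (m + 1) (2 * m)) <
      (m + 1) * (GammaInc (m + 4) (2 * m) - 3 * m * GammaInc (m + 3) (2 * m) +
        2 * m ^ 2 * GammaInc (m + 2) (2 * m)) := by
  obtain ⟨K, gammaInc_mul_le, lt_mul⟩ := exists_gammaInc_mul_le_and_lt_mul hm
  have hG : 0 < GammaInc (m + 1) (2 * m) := gammaInc_pos _ (by positivity)
  have coeff_nonneg : 0 ≤ m ^ 2 - m + 6 := by nlinarith [sq_nonneg (m - 1)]
  rw [← sub_neg, balanced_difference_eq hm, sub_neg]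
  calc (m ^ 3 + m - 6) * GammaInc (m + 1) (2 * m)
      < (m ^ 2 - m + 6) * K * GammaInc (m + 1) (2 * m) := by gcongr
    _ = (m ^ 2 - m + 6) * (GammaInc (m + 1) (2 * m) * K) := by ring
    _ ≤ (m ^ 2 - m + 6) * ((2 * m) ^ (m + 1) * Real.exp (-(2 * m))) := by gcongr

end

/-- For every positive integer `m`,
`4m(m+3)(Γ(m+2,2m) - m Γ(m+1,2m)) ≠ (m+1)(Γ(m+4,2m) - 3m Γ(m+3,2m) + 2m² Γ(m+2,2m))`. -/
theorem balanced_obstruction_gamma (m : ℕ) (hm : 0 < m) :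
    4 * (m : ℝ) * ((m : ℝ) + 3) *
        (GammaInc (m + 2) (2 * m) - m * GammaInc (m + 1) (2 * m))
      ≠ ((m : ℝ) + 1) *
        (GammaInc (m + 4) (2 * m) - 3 * m * GammaInc (m + 3) (2 * m)
          + 2 * (m : ℝ) ^ 2 * GammaInc (m + 2) (2 * m)) :=
  (balanced_obstruction_gamma_general (Nat.cast_pos.2 hm)).ne
end

section
/- For every positive integer m one has the strict inequality Γ(m+4, 2m) − 3m·Γ(m+3, 2m) + 2m²·Γ(m+2, 2m) > 0. -/
open MeasureTheory

/-!
A combination `∑ cₖ Γ(s + k, x)` is the integral over `(x, ∞)` of `p(t) t^(s-1) e^(-t)`, where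
`p(t) = ∑ cₖ t^k`, so it is positive whenever `p` is positive on `(x, ∞)`. For the combination at
hand `s = m + 2` and `p(t) = t² - 3mt + 2m² = (t - m)(t - 2m)`, whose largest root is the
integration limit `2m`.
-/

theorem setIntegral_pos_of_forall_mem_pos {α : Type*} [MeasurableSpace α] {μ : Measure α}
    {f : α → ℝ} {A : Set α} (hA : MeasurableSet A) (hμA : μ A ≠ 0) (hf : IntegrableOn f A μ)
    (hpos : ∀ t ∈ A, 0 < f t) : 0 < ∫ t in A, f t ∂μ := by
  have hnonneg : 0 ≤ᵐ[μ.restrict A] f :=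
    ae_restrict_of_forall_mem hA fun t ht => (hpos t ht).le
  have hsupport : A ⊆ Function.support f ∩ A := fun t ht => ⟨(hpos t ht).ne', ht⟩
  rw [setIntegral_pos_iff_support_of_nonneg_ae hnonneg hf]
  exact hμA.pos.trans_le (measure_mono hsupport)

section GammaInc

variable {s x : ℝ}

theorem integrableOn_Ioi_rpow_sub_one_mul_exp_neg (hs : 0 < s) (hx : 0 ≤ x) :
    IntegrableOn (fun t : ℝ => t ^ (s - 1) * Real.exp (-t)) (Set.Ioi x) := by
  simpa only [mul_comm] using
    (Real.GammaIntegral_convergent hs).mono_set (Set.Ioi_subset_Ioi hx)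

theorem rpow_add_natCast_sub_one_mul_exp_neg {t : ℝ} (ht : t ≠ 0) (s : ℝ) (k : ℕ) :
    t ^ (s + k - 1) * Real.exp (-t) = t ^ k * (t ^ (s - 1) * Real.exp (-t)) := by
  rw [add_sub_right_comm, Real.rpow_add_natCast ht]
  ring

theorem GammaInc_add_natCast (s : ℝ) (hx : 0 ≤ x) (k : ℕ) :
    GammaInc (s + k) x = ∫ t in Set.Ioi x, t ^ k * (t ^ (s - 1) * Real.exp (-t)) :=
  setIntegral_congr_fun measurableSet_Ioi fun _ ht =>
    rpow_add_natCast_sub_one_mul_exp_neg (hx.trans_lt ht).ne' s k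

theorem integrableOn_Ioi_pow_mul_rpow_mul_exp_neg (hs : 0 < s) (hx : 0 ≤ x) (k : ℕ) :
    IntegrableOn (fun t : ℝ => t ^ k * (t ^ (s - 1) * Real.exp (-t))) (Set.Ioi x) :=
  (integrableOn_Ioi_rpow_sub_one_mul_exp_neg (by positivity : 0 < s + k) hx).congr_fun
    (fun _ ht => rpow_add_natCast_sub_one_mul_exp_neg (hx.trans_lt ht).ne' s k) measurableSet_Ioi

variable {n : ℕ}

theorem integrableOn_Ioi_sum_mul_pow_mul_rpow_mul_exp_neg (c : Fin n → ℝ) (hs : 0 < s)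
    (hx : 0 ≤ x) :
    IntegrableOn (fun t : ℝ => (∑ k, c k * t ^ (k : ℕ)) * (t ^ (s - 1) * Real.exp (-t)))
      (Set.Ioi x) := by
  simp only [Finset.sum_mul, mul_assoc]
  exact integrable_finsetSum _ fun k _ =>
    (integrableOn_Ioi_pow_mul_rpow_mul_exp_neg hs hx k).const_mul (c k)

theorem sum_mul_GammaInc_add_natCast (c : Fin n → ℝ) (hs : 0 < s) (hx : 0 ≤ x) :
    ∑ k, c k * GammaInc (s + (k : ℕ)) x =
      ∫ t in Set.Ioi x, (∑ k, c k * t ^ (k : ℕ)) * (t ^ (s - 1) * Real.exp (-t)) := by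
  simp only [GammaInc_add_natCast s hx, ← integral_const_mul, Finset.sum_mul, mul_assoc]
  rw [integral_finsetSum]
  exact fun k _ => (integrableOn_Ioi_pow_mul_rpow_mul_exp_neg hs hx k).const_mul (c k)

theorem sum_mul_GammaInc_add_natCast_pos {c : Fin n → ℝ} (hs : 0 < s) (hx : 0 ≤ x)
    (hc : ∀ t, x < t → 0 < ∑ k, c k * t ^ (k : ℕ)) :
    0 < ∑ k, c k * GammaInc (s + (k : ℕ)) x := by
  rw [sum_mul_GammaInc_add_natCast c hs hx]
  refine setIntegral_pos_of_forall_mem_pos measurableSet_Ioi (by simp)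
    (integrableOn_Ioi_sum_mul_pow_mul_rpow_mul_exp_neg c hs hx) fun t ht => ?_
  have ht_pos : 0 < t := hx.trans_lt ht
  exact mul_pos (hc t ht) (by positivity)

theorem GammaInc_quadratic_comb_pos {a b : ℝ} (hs : 0 < s) (hx : 0 ≤ x) (ha : a ≤ x)
    (hb : b ≤ x) :
    0 < GammaInc (s + 2) x - (a + b) * GammaInc (s + 1) x + a * b * GammaInc s x := by
  have hfactor (t : ℝ) (ht : x < t) : 0 < ∑ k, ![a * b, -(a + b), 1] k * t ^ (k : ℕ) :=
    calc 0 < (t - a) * (t - b) := mul_pos (by linarith) (by linarith)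
      _ = _ := by simp [Fin.sum_univ_three]; ring
  calc 0 < ∑ k, ![a * b, -(a + b), 1] k * GammaInc (s + (k : ℕ)) x :=
        sum_mul_GammaInc_add_natCast_pos hs hx hfactor
    _ = _ := by simp [Fin.sum_univ_three]; ring

end GammaInc

theorem gamma_comb_pos_deg4_general (m : ℝ) (hm : 0 ≤ m) :
    0 < GammaInc (m + 4) (2 * m) - 3 * m * GammaInc (m + 3) (2 * m)
        + 2 * m ^ 2 * GammaInc (m + 2) (2 * m) := by
  have hquad : 0 < GammaInc (m + 2 + 2) (2 * m) - (m + 2 * m) * GammaInc (m + 2 + 1) (2 * m)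
      + m * (2 * m) * GammaInc (m + 2) (2 * m) :=
    GammaInc_quadratic_comb_pos (by positivity) (by positivity) (by linarith) le_rfl
  convert hquad using 3 <;> ring_nf

/-- For every positive integer `m` one has
`Γ(m+4,2m) - 3m Γ(m+3,2m) + 2m² Γ(m+2,2m) > 0`. -/
theorem gamma_comb_pos_deg4 (m : ℕ) (hm : 0 < m) :
    0 < GammaInc (m + 4) (2 * m) - 3 * m * GammaInc (m + 3) (2 * m)
        + 2 * (m : ℝ) ^ 2 * GammaInc (m + 2) (2 * m) := by
  exact gamma_comb_pos_deg4_general m m.cast_nonneg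
end

section
/- Let φ : (0,∞) → ℝ be φ(u) = √(u²+1) + log u − log(1+√(u²+1)). Then for every u > 0 one has the Monge–Ampère identity φ'(u) · (φ'(u) + u·φ''(u)) = 1, and moreover φ'(u) + u·φ''(u) = u/√(u²+1) > 0. (For a radial potential Φ(z) = φ(|z₁|²+|z₂|²) on ℂ²\{0}, the determinant of the complex Hessian (∂²Φ/∂z_i∂z̄_j) equals φ'(u)(φ'(u)+uφ''(u)); this identity is the statement that the Eguchi–Hanson metric is Ricci-flat, and the positivity statements express that it is a Kähler metric.) -/
/-- The radial profile of the Kähler potential of the Eguchi–Hanson metric. -/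
noncomputable def phiEH (u : ℝ) : ℝ :=
  Real.sqrt (u ^ 2 + 1) + Real.log u - Real.log (1 + Real.sqrt (u ^ 2 + 1))

/-!
The derivative of the potential simplifies to `φ'(u) = √(u² + 1) / u`, that is,
`u φ'(u) = √(u² + 1)`. Since `φ' + u φ''` is the derivative of `u φ'`, it equals `u / √(u² + 1)`,
the inverse of `φ'(u)`.
-/

open Topology

theorem deriv_fun_id_smul {𝕜 F : Type*} [NontriviallyNormedField 𝕜] [NormedAddCommGroup F]
    [NormedSpace 𝕜 F] {g : 𝕜 → F} {u : 𝕜} (hg : DifferentiableAt 𝕜 g u) :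
    deriv (fun x ↦ x • g x) u = g u + u • deriv g u := by
  simpa [add_comm] using ((hasDerivAt_id' u).fun_smul hg.hasDerivAt).deriv

theorem hasDerivAt_sqrt_sq_add_const {c u : ℝ} (h : u ^ 2 + c ≠ 0) :
    HasDerivAt (fun x ↦ √(x ^ 2 + c)) (u / √(u ^ 2 + c)) u := by
  have hsq : HasDerivAt (fun x ↦ x ^ 2 + c) (2 * u) u := by
    simpa using (hasDerivAt_pow 2 u).add_const c
  exact (hsq.sqrt h).congr_deriv (mul_div_mul_left _ _ two_ne_zero)

theorem hasDerivAt_phiEH {u : ℝ} (hu : u ≠ 0) : HasDerivAt phiEH (√(u ^ 2 + 1) / u) u := by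
  have hsqrt := hasDerivAt_sqrt_sq_add_const (c := 1) (u := u) (by positivity)
  have hphi := (hsqrt.add (Real.hasDerivAt_log hu)).sub ((hsqrt.const_add 1).log (by positivity))
  refine HasDerivAt.congr_deriv (f := phiEH) hphi ?_
  have hs_pos : 0 < √(u ^ 2 + 1) := by positivity
  have hs_sq : √(u ^ 2 + 1) ^ 2 = u ^ 2 + 1 := Real.sq_sqrt (by positivity)
  set s := √(u ^ 2 + 1)
  calc u / s + u⁻¹ - u / s / (1 + s)
      = u / (1 + s) + u⁻¹ := by field_simp; ring
    _ = (s - 1) / u + u⁻¹ := by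
        congr 1
        rw [div_eq_div_iff (by positivity) hu]
        linear_combination -hs_sq
    _ = s / u := by ring

theorem deriv_phiEH {u : ℝ} (hu : u ≠ 0) : deriv phiEH u = √(u ^ 2 + 1) / u :=
  (hasDerivAt_phiEH hu).deriv

theorem differentiableAt_deriv_phiEH {u : ℝ} (hu : u ≠ 0) :
    DifferentiableAt ℝ (deriv phiEH) u := by
  have hderiv : deriv phiEH =ᶠ[𝓝 u] fun x ↦ √(x ^ 2 + 1) / x :=
    (eventually_ne_nhds hu).mono fun _ ↦ deriv_phiEH
  have hsqrt := hasDerivAt_sqrt_sq_add_const (c := 1) (u := u) (by positivity)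
  exact (hsqrt.differentiableAt.fun_div differentiableAt_id hu).congr_of_eventuallyEq hderiv

theorem deriv_phiEH_add_mul_deriv_deriv_phiEH {u : ℝ} (hu : u ≠ 0) :
    deriv phiEH u + u * deriv (deriv phiEH) u = u / √(u ^ 2 + 1) := by
  have hmul : (fun x ↦ x * deriv phiEH x) =ᶠ[𝓝 u] fun x ↦ √(x ^ 2 + 1) :=
    (eventually_ne_nhds hu).mono fun x hx ↦ by
      simp only [deriv_phiEH hx, mul_div_cancel₀ _ hx]
  calc deriv phiEH u + u * deriv (deriv phiEH) u
      = deriv (fun x ↦ x * deriv phiEH x) u :=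
        (deriv_fun_id_smul (differentiableAt_deriv_phiEH hu)).symm
    _ = deriv (fun x ↦ √(x ^ 2 + 1)) u := hmul.deriv_eq
    _ = u / √(u ^ 2 + 1) := (hasDerivAt_sqrt_sq_add_const (by positivity)).deriv

/-- Monge–Ampère identity for the Eguchi–Hanson potential: for every `u > 0`,
`φ'(u)(φ'(u) + u φ''(u)) = 1`, with `φ'(u) + u φ''(u) = u/√(u²+1) > 0`. -/
theorem phiEH_monge_ampere (u : ℝ) (hu : 0 < u) :
    deriv phiEH u * (deriv phiEH u + u * deriv (deriv phiEH) u) = 1 ∧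
    deriv phiEH u + u * deriv (deriv phiEH) u = u / Real.sqrt (u ^ 2 + 1) ∧
    0 < u / Real.sqrt (u ^ 2 + 1) := by
  have hs : √(u ^ 2 + 1) ≠ 0 := by positivity
  refine ⟨?_, deriv_phiEH_add_mul_deriv_deriv_phiEH hu.ne', by positivity⟩
  rw [deriv_phiEH_add_mul_deriv_deriv_phiEH hu.ne', deriv_phiEH hu.ne']
  rw [div_mul_div_cancel₀ hu.ne', div_self hs]
end

section
/- The function f : (0,∞) → ℝ defined by f(x) = x(x+1)/(Γ(x+2,2x) − x·Γ(x+1,2x)) − 4x³(x+3)/((x+2)·(Γ(x+4,2x) − 3x·Γ(x+3,2x) + 2x²·Γ(x+2,2x))) tends to 0 as x → +∞. -/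
open MeasureTheory Filter

/-!
A linear combination `∑ cᵢ Γ(s+i+1, b)` is the integral over `(b, ∞)` of `t ^ s * p(t) * e ^ (-t)`,
where `p(t) = ∑ cᵢ tⁱ`. If `p` is nonnegative on `(b, ∞)` and at least `m` beyond `z`, the integral
is at least `m * z ^ s * e ^ (-z)`. The two denominators correspond to `p(t) = t - x` with `s = x`
and to `p(t) = (t - x) * (t - 2 * x)` with `s = x + 1`; in both cases `z = 2 * x + 1` gives a
lower bound that outgrows `e ^ x`, hence also the numerators.
-/

lemma integrableOn_rpow_mul_exp_neg_Ioi {a b : ℝ} (ha : 0 < a) (hb : 0 ≤ b) :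
    IntegrableOn (fun t : ℝ => t ^ (a - 1) * Real.exp (-t)) (Set.Ioi b) :=
  ((Real.GammaIntegral_convergent ha).mono_set (Set.Ioi_subset_Ioi hb)).congr_fun
    (fun _ _ => mul_comm _ _) measurableSet_Ioi

lemma integrableOn_rpow_add_natCast_mul_exp_neg_Ioi {s b : ℝ} (hs : -1 < s) (hb : 0 ≤ b) (k : ℕ) :
    IntegrableOn (fun t : ℝ => t ^ (s + k + 1 - 1) * Real.exp (-t)) (Set.Ioi b) :=
  integrableOn_rpow_mul_exp_neg_Ioi (by linarith [k.cast_nonneg (α := ℝ)]) hb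

lemma mul_exp_neg_le_setIntegral_Ioi {g : ℝ → ℝ} {b z c : ℝ} (hbz : b ≤ z)
    (hg : IntegrableOn g (Set.Ioi b)) (hg_nonneg : ∀ t, b < t → 0 ≤ g t)
    (hg_ge : ∀ t, z < t → c * Real.exp (-t) ≤ g t) :
    c * Real.exp (-z) ≤ ∫ t in Set.Ioi b, g t := by
  have hsub : Set.Ioi z ⊆ Set.Ioi b := Set.Ioi_subset_Ioi hbz
  calc c * Real.exp (-z) = ∫ t in Set.Ioi z, c * Real.exp (-t) := by
        rw [integral_const_mul, integral_exp_neg_Ioi]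
    _ ≤ ∫ t in Set.Ioi z, g t :=
        setIntegral_mono_on ((integrableOn_exp_neg_Ioi z).const_mul c) (hg.mono_set hsub)
          measurableSet_Ioi hg_ge
    _ ≤ ∫ t in Set.Ioi b, g t :=
        setIntegral_mono_set hg (ae_restrict_of_forall_mem measurableSet_Ioi hg_nonneg)
          hsub.eventuallyLE

-- The exponent `s + i + 1 - 1` is kept unsimplified so as to match `GammaInc (s + i + 1)`.
lemma rpow_mul_sum_mul_exp_neg_eq {n : ℕ} (c : Fin n → ℝ) (s : ℝ) {t : ℝ} (ht : t ≠ 0) :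
    t ^ s * (∑ i, c i * t ^ (i : ℕ)) * Real.exp (-t) =
      ∑ i, c i * (t ^ (s + i + 1 - 1) * Real.exp (-t)) := by
  rw [Finset.mul_sum, Finset.sum_mul]
  refine Finset.sum_congr rfl fun i _ => ?_
  rw [add_sub_cancel_right, Real.rpow_add_natCast ht]
  ring

section LinearCombination

variable {n : ℕ} (c : Fin n → ℝ) {s b : ℝ}

lemma integrableOn_rpow_mul_sum_mul_exp_neg_Ioi (hs : -1 < s) (hb : 0 ≤ b) :
    IntegrableOn (fun t : ℝ => t ^ s * (∑ i, c i * t ^ (i : ℕ)) * Real.exp (-t)) (Set.Ioi b) :=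
  IntegrableOn.congr_fun
    (integrable_finsetSum _ fun (i : Fin n) _ =>
      (integrableOn_rpow_add_natCast_mul_exp_neg_Ioi hs hb i).const_mul (c i))
    (fun _ ht => (rpow_mul_sum_mul_exp_neg_eq c s (hb.trans_lt ht).ne').symm) measurableSet_Ioi

lemma sum_mul_gammaInc_eq_setIntegral (hs : -1 < s) (hb : 0 ≤ b) :
    ∑ i, c i * GammaInc (s + i + 1) b =
      ∫ t in Set.Ioi b, t ^ s * (∑ i, c i * t ^ (i : ℕ)) * Real.exp (-t) := by
  rw [setIntegral_congr_fun measurableSet_Ioi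
    fun t ht => rpow_mul_sum_mul_exp_neg_eq c s (hb.trans_lt ht).ne',
    integral_finsetSum _ fun (i : Fin n) _ =>
      (integrableOn_rpow_add_natCast_mul_exp_neg_Ioi hs hb i).const_mul (c i)]
  simp only [integral_const_mul, GammaInc]

lemma mul_rpow_mul_exp_neg_le_sum_mul_gammaInc {m z : ℝ} (hs : 0 ≤ s) (hb : 0 ≤ b) (hbz : b ≤ z)
    (hm : 0 ≤ m) (hnonneg : ∀ t, b < t → 0 ≤ ∑ i, c i * t ^ (i : ℕ))
    (hge : ∀ t, z < t → m ≤ ∑ i, c i * t ^ (i : ℕ)) :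
    m * z ^ s * Real.exp (-z) ≤ ∑ i, c i * GammaInc (s + i + 1) b := by
  have hz : 0 ≤ z := hb.trans hbz
  have hs' : -1 < s := by linarith
  rw [sum_mul_gammaInc_eq_setIntegral c hs' hb]
  refine mul_exp_neg_le_setIntegral_Ioi hbz
    (integrableOn_rpow_mul_sum_mul_exp_neg_Ioi c hs' hb) (fun t ht => ?_) (fun t ht => ?_)
  · have ht_pos : 0 < t := hb.trans_lt ht
    have := hnonneg t ht
    positivity
  · have hrpow : z ^ s ≤ t ^ s := Real.rpow_le_rpow hz ht.le hs
    have ht_nonneg : 0 ≤ t := hz.trans ht.le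
    rw [mul_comm m]
    gcongr
    exact hge t ht

end LinearCombination

lemma isBigO_exp_rpow_mul_exp_neg_atTop {a : ℝ} (ha : 0 < a) (d r : ℝ) :
    Real.exp =O[atTop] fun x : ℝ => (a * x + d) ^ (x + r) * Real.exp (-(a * x + d)) := by
  have hbase : ∀ᶠ x : ℝ in atTop, Real.exp (a + 1) ≤ a * x + d :=
    ((tendsto_id.const_mul_atTop ha).atTop_add tendsto_const_nhds).eventually_ge_atTop _
  refine Asymptotics.IsBigO.of_bound (Real.exp (d - (a + 1) * r)) ?_
  filter_upwards [hbase, eventually_ge_atTop (-r)] with x hbase hx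
  have hrpow : Real.exp ((a + 1) * (x + r)) ≤ (a * x + d) ^ (x + r) := by
    rw [Real.exp_mul]
    exact Real.rpow_le_rpow (Real.exp_pos _).le hbase (by linarith)
  have hrpow_nonneg := (Real.exp_pos _).le.trans hrpow
  rw [Real.norm_of_nonneg (Real.exp_pos x).le, Real.norm_of_nonneg (by positivity)]
  calc Real.exp x = Real.exp (d - (a + 1) * r) *
        (Real.exp ((a + 1) * (x + r)) * Real.exp (-(a * x + d))) := by
        rw [← Real.exp_add, ← Real.exp_add]
        ring_nf
    _ ≤ _ := by gcongr

lemma isBigO_exp_sum_mul_gammaInc_atTop {n : ℕ} {c : ℝ → Fin n → ℝ} {a d m : ℝ} (r : ℝ) (ha : 0 < a)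
    (hd : 0 ≤ d) (hm : 0 < m)
    (hnonneg : ∀ᶠ x in atTop, ∀ t, a * x < t → 0 ≤ ∑ i, c x i * t ^ (i : ℕ))
    (hge : ∀ᶠ x in atTop, ∀ t, a * x + d < t → m ≤ ∑ i, c x i * t ^ (i : ℕ)) :
    Real.exp =O[atTop] fun x => ∑ i, c x i * GammaInc (x + r + i + 1) (a * x) := by
  refine (isBigO_exp_rpow_mul_exp_neg_atTop ha d r).trans (.of_bound m⁻¹ ?_)
  filter_upwards [hnonneg, hge, eventually_ge_atTop 0, eventually_ge_atTop (-r)]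
    with x hnonneg hge hx hxr
  have hlower := mul_rpow_mul_exp_neg_le_sum_mul_gammaInc (c x) (s := x + r) (by linarith)
    (by positivity) (le_add_of_nonneg_right hd) hm.le hnonneg hge
  rw [Real.norm_of_nonneg (by positivity), le_inv_mul_iff₀ hm, ← mul_assoc]
  exact hlower.trans (le_abs_self _)

lemma isBigO_exp_gammaInc_sub_atTop :
    Real.exp =O[atTop] fun x : ℝ =>
      GammaInc (x + 2) (2 * x) - x * GammaInc (x + 1) (2 * x) := by
  have hpoly (x t : ℝ) : ∑ i, ![-x, 1] i * t ^ (i : ℕ) = t - x := by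
    simp only [Fin.sum_univ_two, Matrix.cons_val, Fin.val_zero, Fin.val_one]
    ring
  refine (isBigO_exp_sum_mul_gammaInc_atTop (c := fun x => ![-x, 1]) (a := 2) (d := 1) (m := 1) 0
    two_pos zero_le_one one_pos ?_ ?_).congr_right fun x => ?_
  · filter_upwards [eventually_ge_atTop 0] with x hx t ht
    rw [hpoly]
    linarith
  · filter_upwards [eventually_ge_atTop 0] with x hx t ht
    rw [hpoly]
    linarith
  · simp only [Fin.sum_univ_two, Matrix.cons_val, Fin.val_zero, Fin.val_one, Nat.cast_zero,
      Nat.cast_one]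
    ring_nf

lemma isBigO_exp_gammaInc_sub_add_atTop :
    Real.exp =O[atTop] fun x : ℝ =>
      GammaInc (x + 4) (2 * x) - 3 * x * GammaInc (x + 3) (2 * x)
        + 2 * x ^ 2 * GammaInc (x + 2) (2 * x) := by
  have hpoly (x t : ℝ) :
      ∑ i, ![2 * x ^ 2, -(3 * x), 1] i * t ^ (i : ℕ) = (t - x) * (t - 2 * x) := by
    simp only [Fin.sum_univ_three, Matrix.cons_val, Fin.val_zero, Fin.val_one, Fin.val_two]
    ring
  refine (isBigO_exp_sum_mul_gammaInc_atTop (c := fun x => ![2 * x ^ 2, -(3 * x), 1]) (a := 2)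
    (d := 1) (m := 1) 1 two_pos zero_le_one one_pos ?_ ?_).congr_right fun x => ?_
  · filter_upwards [eventually_ge_atTop 0] with x hx t ht
    rw [hpoly]
    exact mul_nonneg (by linarith) (by linarith)
  · filter_upwards [eventually_ge_atTop 0] with x hx t ht
    rw [hpoly]
    exact one_le_mul_of_one_le_of_one_le (by linarith) (by linarith)
  · simp only [Fin.sum_univ_three, Matrix.cons_val, Fin.val_zero, Fin.val_one, Fin.val_two,
      Nat.cast_zero, Nat.cast_one, Nat.cast_ofNat]
    ring_nf

/-- The function `f(x) = x(x+1)/(Γ(x+2,2x) - x Γ(x+1,2x))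
  - 4x³(x+3)/((x+2)(Γ(x+4,2x) - 3x Γ(x+3,2x) + 2x² Γ(x+2,2x)))` tends to `0` as `x → ∞`. -/
theorem balanced_fun_tendsto_zero :
    Tendsto (fun x : ℝ =>
        x * (x + 1) / (GammaInc (x + 2) (2 * x) - x * GammaInc (x + 1) (2 * x))
          - 4 * x ^ 3 * (x + 3) /
            ((x + 2) * (GammaInc (x + 4) (2 * x) - 3 * x * GammaInc (x + 3) (2 * x)
              + 2 * x ^ 2 * GammaInc (x + 2) (2 * x))))
      atTop (nhds 0) := by
  have hpow (n : ℕ) : (fun x : ℝ => x ^ n) =o[atTop] Real.exp := Real.isLittleO_pow_exp_atTop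
  have hnum₁ : (fun x : ℝ => x * (x + 1)) =o[atTop] Real.exp :=
    ((hpow 2).add (hpow 1)).congr_left fun x => by ring
  have hnum₂ : (fun x : ℝ => 4 * x ^ 3 * (x + 3)) =o[atTop] Real.exp :=
    (((hpow 4).const_mul_left 4).add ((hpow 3).const_mul_left 12)).congr_left fun x => by ring
  have hone : (fun _ : ℝ => (1 : ℝ)) =O[atTop] fun x : ℝ => x + 2 := by
    refine .of_bound' ?_
    filter_upwards [eventually_ge_atTop 0] with x hx
    rw [norm_one, Real.norm_of_nonneg (by positivity)]
    linarith
  have hden₂ := (hone.mul isBigO_exp_gammaInc_sub_add_atTop).congr_left fun _ => one_mul _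
  simpa only [sub_zero] using
    (hnum₁.trans_isBigO isBigO_exp_gammaInc_sub_atTop).tendsto_div_nhds_zero.sub
      (hnum₂.trans_isBigO hden₂).tendsto_div_nhds_zero
end
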